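/- arXiv:2205.12114 — 7 statements merged into one kernel-verified Lean document; each statement's English description precedes it below -/
import Mathlib

section
/- For every n ∈ ℕ and every nondeterministic register automaton (NRA) A with at most n registers, there exists a register set automaton (RsA) B with at most n registers such that L(B) = L(A). -/
/-- A data word over alphabet `Sigma`, with data domain `𝔻 = ℕ`. -/
abbrev DataWord (Sigma : Type) : Type :=
  List (Sigma × ℕ)
/-- An update instruction of a register automaton: copy the content of register `r`,
store the current input value (`in`), or clear the register (`⊥`). -/
inductive NRAUpd : Type where
  | reg (r : ℕ)
  | input
  | clear

/-- A transition `(src, letter, gEq, gNeq, upd, tgt)` of a register automaton. -/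
structure NRATrans (Sigma : Type) where
  src : ℕ
  letter : Sigma
  gEq : Finset ℕ
  gNeq : Finset ℕ
  upd : ℕ → NRAUpd
  tgt : ℕ

/-- The register assignment obtained after taking transition `t` with current input
data value `d`, starting from the assignment `f`. -/
def NRATrans.apply {Sigma : Type} (t : NRATrans Sigma) (f : ℕ → Option ℕ) (d : ℕ) :
    ℕ → Option ℕ := fun r =>
  match t.upd r with
  | NRAUpd.reg r' => f r'
  | NRAUpd.input => some d
  | NRAUpd.clear => none

/-- A (nondeterministic) register automaton; states and registers are drawn from `ℕ`. -/
structure NRA (Sigma : Type) where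
  Q : Finset ℕ
  R : Finset ℕ
  Δ : Set (NRATrans Sigma)
  I : Finset ℕ
  F : Finset ℕ
  finite_trans : Δ.Finite
  I_sub : I ⊆ Q
  F_sub : F ⊆ Q
  wf : ∀ t ∈ Δ, t.src ∈ Q ∧ t.tgt ∈ Q ∧ t.gEq ⊆ R ∧ t.gNeq ⊆ R ∧
    Disjoint t.gEq t.gNeq ∧ ∀ r ∈ R, ∀ r' : ℕ, t.upd r = NRAUpd.reg r' → r' ∈ R

/-- One step of an NRA from configuration `c` to configuration `c'`, reading
the letter `x`. -/
def NRA.Step {Sigma : Type} (A : NRA Sigma) (c : ℕ × (ℕ → Option ℕ)) (x : Sigma × ℕ)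
    (c' : ℕ × (ℕ → Option ℕ)) : Prop :=
  ∃ t ∈ A.Δ, t.src = c.1 ∧ t.letter = x.1 ∧
    (∀ r ∈ t.gEq, c.2 r = some x.2) ∧ (∀ r ∈ t.gNeq, c.2 r ≠ some x.2) ∧
    c' = (t.tgt, t.apply c.2 x.2)

/-- `A.Run c w c'` holds iff `A` can read the data word `w` going from
configuration `c` to configuration `c'`. -/
inductive NRA.Run {Sigma : Type} (A : NRA Sigma) :
    (ℕ × (ℕ → Option ℕ)) → DataWord Sigma → (ℕ × (ℕ → Option ℕ)) → Prop where
  | nil (c : ℕ × (ℕ → Option ℕ)) : NRA.Run A c [] c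
  | cons {c c' c'' : ℕ × (ℕ → Option ℕ)} {x : Sigma × ℕ} {w : DataWord Sigma} :
      A.Step c x c' → NRA.Run A c' w c'' → NRA.Run A c (x :: w) c''

/-- The language of an NRA: words on which there exists an accepting run
starting from some initial state with all registers empty (`⊥`). -/
def NRA.Lang {Sigma : Type} (A : NRA Sigma) : Set (DataWord Sigma) :=
  { w | ∃ q₀ ∈ A.I, ∃ c : ℕ × (ℕ → Option ℕ),
      A.Run (q₀, fun _ => none) w c ∧ c.1 ∈ A.F }

/-- The language of a universal register automaton (same syntax as an NRA):
a data word `w` is accepted iff every run of the automaton on `w` is accepting,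
where a run that gets stuck before reading all of `w` counts as non-accepting.
Equivalently: every partial run on a proper prefix of `w` can be extended, and
every run reading all of `w` ends in a final state. -/
def NRA.URALang {Sigma : Type} (A : NRA Sigma) : Set (DataWord Sigma) :=
  { w | ∀ q₀ ∈ A.I, ∀ u v : DataWord Sigma, w = u ++ v →
      ∀ c : ℕ × (ℕ → Option ℕ), A.Run (q₀, fun _ => none) u c →
        (v = [] → c.1 ∈ A.F) ∧
        ∀ x v', v = x :: v' → ∃ c', A.Step c x c' }
/-- A transition `(src, letter, gIn, gNin, upd, tgt)` of a register set automaton.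
In the update, `none` stands for the current input value `in`, and `some r`
for register `r`. -/
structure RsATrans (Sigma : Type) where
  src : ℕ
  letter : Sigma
  gIn : Finset ℕ
  gNin : Finset ℕ
  upd : ℕ → Finset (Option ℕ)
  tgt : ℕ

/-- The register assignment obtained after taking transition `t` with current input
data value `d`, starting from the assignment `f`: each register gets the union of
the contents of the registers in its update set, together with `{d}` if the update
set contains `in`. -/
def RsATrans.apply {Sigma : Type} (t : RsATrans Sigma) (f : ℕ → Finset ℕ) (d : ℕ) :
    ℕ → Finset ℕ := fun r =>
  (t.upd r).biUnion fun o =>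
    match o with
    | none => {d}
    | some r' => f r'

/-- A register set automaton (RsA); states and registers are drawn from `ℕ`. -/
structure RsA (Sigma : Type) where
  Q : Finset ℕ
  R : Finset ℕ
  Δ : Set (RsATrans Sigma)
  I : Finset ℕ
  F : Finset ℕ
  finite_trans : Δ.Finite
  I_sub : I ⊆ Q
  F_sub : F ⊆ Q
  wf : ∀ t ∈ Δ, t.src ∈ Q ∧ t.tgt ∈ Q ∧ t.gIn ⊆ R ∧ t.gNin ⊆ R ∧
    Disjoint t.gIn t.gNin ∧ ∀ r ∈ R, ∀ r' : ℕ, some r' ∈ t.upd r → r' ∈ R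

/-- One step of an RsA from configuration `c` to configuration `c'`, reading
the letter `x`. -/
def RsA.Step {Sigma : Type} (A : RsA Sigma) (c : ℕ × (ℕ → Finset ℕ)) (x : Sigma × ℕ)
    (c' : ℕ × (ℕ → Finset ℕ)) : Prop :=
  ∃ t ∈ A.Δ, t.src = c.1 ∧ t.letter = x.1 ∧
    (∀ r ∈ t.gIn, x.2 ∈ c.2 r) ∧ (∀ r ∈ t.gNin, x.2 ∉ c.2 r) ∧
    c' = (t.tgt, t.apply c.2 x.2)

/-- `A.Run c w c'` holds iff `A` can read the data word `w` going from
configuration `c` to configuration `c'`. -/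
inductive RsA.Run {Sigma : Type} (A : RsA Sigma) :
    (ℕ × (ℕ → Finset ℕ)) → DataWord Sigma → (ℕ × (ℕ → Finset ℕ)) → Prop where
  | nil (c : ℕ × (ℕ → Finset ℕ)) : RsA.Run A c [] c
  | cons {c c' c'' : ℕ × (ℕ → Finset ℕ)} {x : Sigma × ℕ} {w : DataWord Sigma} :
      A.Step c x c' → RsA.Run A c' w c'' → RsA.Run A c (x :: w) c''

/-- The language of an RsA: words on which there exists an accepting run
starting from some initial state with all registers empty. -/
def RsA.Lang {Sigma : Type} (A : RsA Sigma) : Set (DataWord Sigma) :=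
  { w | ∃ q₀ ∈ A.I, ∃ c : ℕ × (ℕ → Finset ℕ),
      A.Run (q₀, fun _ => ∅) w c ∧ c.1 ∈ A.F }

/-- Translate an NRA update into an RsA update. -/
def NRAUpd.toSet : NRAUpd → Finset (Option ℕ)
  | NRAUpd.reg r => {some r}
  | NRAUpd.input => {none}
  | NRAUpd.clear => ∅

/-- Translate an NRA transition into an RsA transition. -/
def NRATrans.toRsA {Sigma : Type} (t : NRATrans Sigma) : RsATrans Sigma :=
  ⟨t.src, t.letter, t.gEq, t.gNeq, fun r => (t.upd r).toSet, t.tgt⟩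

/-- Translate an NRA configuration into an RsA configuration. -/
def cfgMap (c : ℕ × (ℕ → Option ℕ)) : ℕ × (ℕ → Finset ℕ) :=
  (c.1, fun r => (c.2 r).toFinset)

theorem toRsA_apply {Sigma : Type} (t : NRATrans Sigma) (f : ℕ → Option ℕ) (d : ℕ) :
    t.toRsA.apply (fun r => (f r).toFinset) d = fun r => (t.apply f d r).toFinset := by
  funext r
  cases h : t.upd r <;>
    simp [RsATrans.apply, NRATrans.apply, NRATrans.toRsA, NRAUpd.toSet, h]

/-- The RsA simulating a given NRA. -/
def NRA.toRsA {Sigma : Type} (A : NRA Sigma) : RsA Sigma where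
  Q := A.Q
  R := A.R
  Δ := Set.image NRATrans.toRsA A.Δ
  I := A.I
  F := A.F
  finite_trans := A.finite_trans.image _
  I_sub := A.I_sub
  F_sub := A.F_sub
  wf := by
    rintro _ ⟨t, ht, rfl⟩
    obtain ⟨h1, h2, h3, h4, h5, h6⟩ := A.wf t ht
    refine ⟨h1, h2, h3, h4, h5, ?_⟩
    intro r hr r' hr'
    apply h6 r hr r'
    cases h : t.upd r <;> simp_all [NRATrans.toRsA, NRAUpd.toSet]

theorem step_iff {Sigma : Type} (A : NRA Sigma) (c : ℕ × (ℕ → Option ℕ)) (x : Sigma × ℕ)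
    (c' : ℕ × (ℕ → Finset ℕ)) :
    A.toRsA.Step (cfgMap c) x c' ↔ ∃ c₀, A.Step c x c₀ ∧ c' = cfgMap c₀ := by
  constructor
  · rintro ⟨_, ⟨t, ht, rfl⟩, h1, h2, h3, h4, h5⟩
    refine ⟨_, ⟨t, ht, h1, h2, fun r hr => ?_, fun r hr => ?_, rfl⟩, ?_⟩
    · simpa [cfgMap] using h3 r hr
    · simpa [cfgMap] using h4 r hr
    · rw [h5]
      exact Prod.ext rfl (toRsA_apply t c.2 x.2)
  · rintro ⟨_, ⟨t, ht, h1, h2, h3, h4, rfl⟩, rfl⟩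
    refine ⟨_, ⟨t, ht, rfl⟩, h1, h2, fun r hr => ?_, fun r hr => ?_, ?_⟩
    · simpa [cfgMap] using h3 r hr
    · simpa [cfgMap] using h4 r hr
    · exact Prod.ext rfl (toRsA_apply t c.2 x.2).symm

theorem run_iff {Sigma : Type} (A : NRA Sigma) (w : DataWord Sigma) :
    ∀ (c : ℕ × (ℕ → Option ℕ)) (c' : ℕ × (ℕ → Finset ℕ)),
    A.toRsA.Run (cfgMap c) w c' ↔ ∃ c₀, A.Run c w c₀ ∧ c' = cfgMap c₀ := by
  induction w with
  | nil =>
    intro c c'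
    constructor
    · intro h
      cases h
      exact ⟨c, NRA.Run.nil c, rfl⟩
    · rintro ⟨c₀, h, rfl⟩
      cases h
      exact RsA.Run.nil _
  | cons x w ih =>
    intro c c'
    constructor
    · intro h
      cases h with
      | cons hs hr =>
        obtain ⟨c₁, h1, rfl⟩ := (step_iff A c x _).1 hs
        obtain ⟨c₂, h2, rfl⟩ := (ih c₁ _).1 hr
        exact ⟨c₂, NRA.Run.cons h1 h2, rfl⟩
    · rintro ⟨c₀, h, rfl⟩
      cases h with
      | cons hs hr =>
        exact RsA.Run.cons ((step_iff A c x _).2 ⟨_, hs, rfl⟩) ((ih _ _).2 ⟨_, hr, rfl⟩)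

/-- For every `n` and every NRA `A` with at most `n` registers,
there exists an RsA `B` with at most `n` registers accepting the same language. -/
theorem nra_to_rsa (Sigma : Type) [Fintype Sigma] [Nonempty Sigma]
    (n : ℕ) (A : NRA Sigma) (hA : A.R.card ≤ n) :
    ∃ B : RsA Sigma, B.R.card ≤ n ∧ RsA.Lang B = NRA.Lang A := by
  refine ⟨A.toRsA, hA, ?_⟩
  ext w
  constructor
  · rintro ⟨q, hq, c, hr, hf⟩
    obtain ⟨c₀, h, rfl⟩ := (run_iff A w (q, fun _ => none) c).1 hr
    exact ⟨q, hq, c₀, h, hf⟩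
  · rintro ⟨q, hq, c, hr, hf⟩
    exact ⟨q, hq, cfgMap c, (run_iff A w (q, fun _ => none) _).2 ⟨c, hr, rfl⟩, hf⟩
end

section
/- The class of languages recognized by register set automata is closed under intersection: for any two RsAs A₁ and A₂ over the same alphabet Σ, there exists an RsA A with L(A) = L(A₁) ∩ L(A₂). -/
/-- Interleave two register-indexed families: even indices carry the first, odd the second. -/
def rsaComb {α : Type} (f g : ℕ → α) : ℕ → α := fun n =>
  if n % 2 = 0 then f (n / 2) else g (n / 2)

theorem rsaComb_even {α : Type} (f g : ℕ → α) (n : ℕ) : rsaComb f g (2 * n) = f n := by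
  simp [rsaComb]

theorem rsaComb_odd {α : Type} (f g : ℕ → α) (n : ℕ) : rsaComb f g (2 * n + 1) = g n := by
  have h1 : (2 * n + 1) % 2 ≠ 0 := by omega
  have h2 : (2 * n + 1) / 2 = n := by omega
  simp only [rsaComb, if_neg h1, h2]

/-- Disjoint union of two finite register sets. -/
def rsaUn (s t : Finset ℕ) : Finset ℕ :=
  s.image (fun n => 2 * n) ∪ t.image (fun n => 2 * n + 1)

theorem mem_rsaUn {s t : Finset ℕ} {n : ℕ} :
    n ∈ rsaUn s t ↔ (∃ a ∈ s, 2 * a = n) ∨ (∃ a ∈ t, 2 * a + 1 = n) := by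
  simp [rsaUn]

/-- The product of two transitions. -/
def RsATrans.prod {Sigma : Type} (t u : RsATrans Sigma) : RsATrans Sigma where
  src := Nat.pair t.src u.src
  letter := t.letter
  gIn := rsaUn t.gIn u.gIn
  gNin := rsaUn t.gNin u.gNin
  upd := rsaComb (fun n => (t.upd n).image (Option.map (fun n => 2 * n)))
    (fun n => (u.upd n).image (Option.map (fun n => 2 * n + 1)))
  tgt := Nat.pair t.tgt u.tgt

theorem RsATrans.prod_apply {Sigma : Type} (t u : RsATrans Sigma) (f g : ℕ → Finset ℕ) (d : ℕ) :
    (t.prod u).apply (rsaComb f g) d = rsaComb (t.apply f d) (u.apply g d) := by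
  funext n
  obtain ⟨k, rfl | rfl⟩ : ∃ k, n = 2 * k ∨ n = 2 * k + 1 := ⟨n / 2, by omega⟩
  · rw [rsaComb_even]
    simp only [RsATrans.apply, RsATrans.prod, rsaComb_even, Finset.image_biUnion]
    congr 1
    funext o
    cases o <;> simp [rsaComb_even]
  · rw [rsaComb_odd]
    simp only [RsATrans.apply, RsATrans.prod, rsaComb_odd, Finset.image_biUnion]
    congr 1
    funext o
    cases o <;> simp [rsaComb_odd]

/-- The product automaton. -/
def RsA.prod {Sigma : Type} (A B : RsA Sigma) : RsA Sigma where
  Q := (A.Q ×ˢ B.Q).image (fun p => Nat.pair p.1 p.2)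
  R := rsaUn A.R B.R
  Δ := (fun p : RsATrans Sigma × RsATrans Sigma => p.1.prod p.2) ''
    {p | p ∈ A.Δ ×ˢ B.Δ ∧ p.1.letter = p.2.letter}
  I := (A.I ×ˢ B.I).image (fun p => Nat.pair p.1 p.2)
  F := (A.F ×ˢ B.F).image (fun p => Nat.pair p.1 p.2)
  finite_trans := ((A.finite_trans.prod B.finite_trans).subset (fun _ h => h.1)).image _
  I_sub := Finset.image_subset_image (Finset.product_subset_product A.I_sub B.I_sub)
  F_sub := Finset.image_subset_image (Finset.product_subset_product A.F_sub B.F_sub)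
  wf := by
    rintro _ ⟨⟨t, u⟩, ⟨⟨ht, hu⟩, -⟩, rfl⟩
    obtain ⟨a1, a2, a3, a4, a5, a6⟩ := A.wf t ht
    obtain ⟨b1, b2, b3, b4, b5, b6⟩ := B.wf u hu
    refine ⟨?_, ?_, ?_, ?_, ?_, ?_⟩
    · exact Finset.mem_image.2 ⟨(t.src, u.src), Finset.mem_product.2 ⟨a1, b1⟩, rfl⟩
    · exact Finset.mem_image.2 ⟨(t.tgt, u.tgt), Finset.mem_product.2 ⟨a2, b2⟩, rfl⟩
    · exact Finset.union_subset_union (Finset.image_subset_image a3) (Finset.image_subset_image b3)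
    · exact Finset.union_subset_union (Finset.image_subset_image a4) (Finset.image_subset_image b4)
    · rw [Finset.disjoint_left] at a5 b5 ⊢
      intro n h1 h2
      rcases mem_rsaUn.1 h1 with ⟨k, hk, e⟩ | ⟨k, hk, e⟩ <;>
      rcases mem_rsaUn.1 h2 with ⟨l, hl, e'⟩ | ⟨l, hl, e'⟩
      · obtain rfl : k = l := by omega
        exact a5 hk hl
      · omega
      · omega
      · obtain rfl : k = l := by omega
        exact b5 hk hl
    · intro r hr r' h
      rcases mem_rsaUn.1 hr with ⟨k, hk, rfl⟩ | ⟨k, hk, rfl⟩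
      · simp only [RsATrans.prod, rsaComb_even, Finset.mem_image, Option.map_eq_some_iff] at h
        obtain ⟨_, ho, l, rfl, rfl⟩ := h
        exact mem_rsaUn.2 (Or.inl ⟨l, a6 k hk l ho, rfl⟩)
      · simp only [RsATrans.prod, rsaComb_odd, Finset.mem_image, Option.map_eq_some_iff] at h
        obtain ⟨_, ho, l, rfl, rfl⟩ := h
        exact mem_rsaUn.2 (Or.inr ⟨l, b6 k hk l ho, rfl⟩)

/-- The product of two configurations. -/
def rsaCfg (c d : ℕ × (ℕ → Finset ℕ)) : ℕ × (ℕ → Finset ℕ) :=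
  (Nat.pair c.1 d.1, rsaComb c.2 d.2)

theorem RsA.prod_step {Sigma : Type} (A B : RsA Sigma) (c d e : ℕ × (ℕ → Finset ℕ))
    (x : Sigma × ℕ) :
    (A.prod B).Step (rsaCfg c d) x e ↔ ∃ c' d', A.Step c x c' ∧ B.Step d x d' ∧ e = rsaCfg c' d' := by
  constructor
  · rintro ⟨_, ⟨⟨t, u⟩, ⟨⟨ht, hu⟩, hl⟩, rfl⟩, h1, h2, h3, h4, rfl⟩
    obtain ⟨e1, e2⟩ := Nat.pair_eq_pair.1 h1
    refine ⟨_, _, ⟨t, ht, e1, h2, ?_, ?_, rfl⟩, ⟨u, hu, e2, hl.symm.trans h2, ?_, ?_, rfl⟩, ?_⟩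
    · intro r hr
      simpa [rsaCfg, rsaComb_even] using h3 (2 * r) (mem_rsaUn.2 (Or.inl ⟨r, hr, rfl⟩))
    · intro r hr
      simpa [rsaCfg, rsaComb_even] using h4 (2 * r) (mem_rsaUn.2 (Or.inl ⟨r, hr, rfl⟩))
    · intro r hr
      simpa [rsaCfg, rsaComb_odd] using h3 (2 * r + 1) (mem_rsaUn.2 (Or.inr ⟨r, hr, rfl⟩))
    · intro r hr
      simpa [rsaCfg, rsaComb_odd] using h4 (2 * r + 1) (mem_rsaUn.2 (Or.inr ⟨r, hr, rfl⟩))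
    · exact Prod.ext rfl (RsATrans.prod_apply t u c.2 d.2 x.2)
  · rintro ⟨_, _, ⟨t, ht, e1, h2, h3, h4, rfl⟩, ⟨u, hu, e2, k2, k3, k4, rfl⟩, rfl⟩
    refine ⟨t.prod u, ⟨(t, u), ⟨⟨ht, hu⟩, h2.trans k2.symm⟩, rfl⟩,
      Nat.pair_eq_pair.2 ⟨e1, e2⟩, h2, ?_, ?_,
      Prod.ext rfl (RsATrans.prod_apply t u c.2 d.2 x.2).symm⟩
    · intro r hr
      rcases mem_rsaUn.1 hr with ⟨k, hk, rfl⟩ | ⟨k, hk, rfl⟩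
      · simpa [rsaCfg, rsaComb_even] using h3 k hk
      · simpa [rsaCfg, rsaComb_odd] using k3 k hk
    · intro r hr
      rcases mem_rsaUn.1 hr with ⟨k, hk, rfl⟩ | ⟨k, hk, rfl⟩
      · simpa [rsaCfg, rsaComb_even] using h4 k hk
      · simpa [rsaCfg, rsaComb_odd] using k4 k hk

theorem RsA.prod_run {Sigma : Type} (A B : RsA Sigma) (w : DataWord Sigma) :
    ∀ c d e : ℕ × (ℕ → Finset ℕ), (A.prod B).Run (rsaCfg c d) w e ↔
      ∃ c' d', A.Run c w c' ∧ B.Run d w d' ∧ e = rsaCfg c' d' := by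
  induction w with
  | nil =>
    intro c d e
    constructor
    · intro h
      cases h
      exact ⟨c, d, .nil _, .nil _, rfl⟩
    · rintro ⟨_, _, h, h', rfl⟩
      cases h
      cases h'
      exact .nil _
  | cons x w ih =>
    intro c d e
    constructor
    · intro h
      cases h with
      | cons hs hr =>
        obtain ⟨c1, d1, h1, h2, rfl⟩ := (RsA.prod_step A B _ _ _ _).1 hs
        obtain ⟨c2, d2, k1, k2, rfl⟩ := (ih _ _ _).1 hr
        exact ⟨c2, d2, .cons h1 k1, .cons h2 k2, rfl⟩
    · rintro ⟨c2, d2, h, h', rfl⟩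
      cases h with
      | cons h1 k1 =>
        cases h' with
        | cons h2 k2 =>
          exact .cons ((RsA.prod_step A B _ _ _ _).2 ⟨_, _, h1, h2, rfl⟩)
            ((ih _ _ _).2 ⟨_, _, k1, k2, rfl⟩)

theorem rsaCfg_empty (p q : ℕ) :
    rsaCfg (p, fun _ => ∅) (q, fun _ => ∅) = (Nat.pair p q, fun _ => ∅) := by
  refine Prod.ext rfl (funext fun n => ?_)
  simp [rsaCfg, rsaComb]

/-- RsA languages are closed under intersection. -/
theorem rsa_closed_under_intersection (Sigma : Type) [Fintype Sigma] [Nonempty Sigma]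
    (A₁ A₂ : RsA Sigma) :
    ∃ A : RsA Sigma, RsA.Lang A = RsA.Lang A₁ ∩ RsA.Lang A₂ := by
  refine ⟨A₁.prod A₂, Set.ext fun w => ⟨?_, ?_⟩⟩
  · rintro ⟨_, hq, c, hr, hF⟩
    obtain ⟨⟨p, q⟩, hpq, rfl⟩ := Finset.mem_image.1 hq
    obtain ⟨hp, hq'⟩ := Finset.mem_product.1 hpq
    rw [← rsaCfg_empty] at hr
    obtain ⟨c1, c2, r1, r2, rfl⟩ := (RsA.prod_run A₁ A₂ w _ _ _).1 hr
    obtain ⟨⟨a, b⟩, hab, e⟩ := Finset.mem_image.1 hF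
    obtain ⟨ha, hb⟩ := Finset.mem_product.1 hab
    obtain ⟨e1, e2⟩ := Nat.pair_eq_pair.1 e
    exact ⟨⟨p, hp, c1, r1, e1 ▸ ha⟩, ⟨q, hq', c2, r2, e2 ▸ hb⟩⟩
  · rintro ⟨⟨p, hp, c1, r1, f1⟩, ⟨q, hq, c2, r2, f2⟩⟩
    refine ⟨Nat.pair p q, Finset.mem_image.2 ⟨(p, q), Finset.mem_product.2 ⟨hp, hq⟩, rfl⟩,
      rsaCfg c1 c2, ?_, Finset.mem_image.2 ⟨(c1.1, c2.1), Finset.mem_product.2 ⟨f1, f2⟩, rfl⟩⟩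
    rw [← rsaCfg_empty]
    exact (RsA.prod_run A₁ A₂ w _ _ _).2 ⟨_, _, r1, r2, rfl⟩
end

section
/- The class of languages recognized by register set automata is not closed under complement. Concretely, over the unary alphabet Σ = {a}, the language L_¬allrep = { w : some data value occurs at exactly one position of w } is recognized by an RsA (with one register), but its complement L_allrep = { w : every data value occurring in w occurs at at least two positions of w } is not recognized by any RsA. -/
/-- The language of data words (over the unary alphabet) in which some data value
occurs at exactly one position. -/
def LnegAllRep : Set (DataWord Unit) :=
  { w | ∃ i : Fin w.length, ∀ j : Fin w.length, i ≠ j → (w.get i).2 ≠ (w.get j).2 }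

/-- The language of data words (over the unary alphabet) in which every data value
that occurs, occurs at at least two positions. -/
def LallRep : Set (DataWord Unit) :=
  { w | ∀ i : Fin w.length, ∃ j : Fin w.length, i ≠ j ∧ (w.get i).2 = (w.get j).2 }

namespace RsAProof

/-! ### Part 1: an automaton for `LnegAllRep` -/

def t1 : RsATrans Unit := ⟨0, (), ∅, ∅, fun _ => {some 0, none}, 0⟩
def t2 : RsATrans Unit := ⟨0, (), ∅, {0}, fun _ => {none}, 1⟩
def t3 : RsATrans Unit := ⟨1, (), ∅, {0}, fun _ => {some 0}, 1⟩

def B : RsA Unit where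
  Q := {0, 1}
  R := {0}
  Δ := {t1, t2, t3}
  I := {0}
  F := {1}
  finite_trans := by simp
  I_sub := by simp
  F_sub := by simp
  wf := by
    intro t ht
    simp only [Set.mem_insert_iff, Set.mem_singleton_iff] at ht
    rcases ht with rfl | rfl | rfl <;> simp [t1, t2, t3]

theorem B_one (f : ℕ → Finset ℕ) (w : DataWord Unit) :
    (∃ c, B.Run (1, f) w c ∧ c.1 = 1) ↔ ∀ x ∈ w, x.2 ∉ f 0 := by
  induction w generalizing f with
  | nil =>
    simp only [List.not_mem_nil, false_implies, implies_true, iff_true]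
    exact ⟨_, RsA.Run.nil _, rfl⟩
  | cons x w ih =>
    have key : (t3.apply f x.2) 0 = f 0 := by
      ext y; simp [RsATrans.apply, t3]
    constructor
    · rintro ⟨c, hr, hc⟩
      cases hr with
      | cons hs hr =>
        obtain ⟨t, ht, hsrc, -, -, hn, rfl⟩ := hs
        simp only [B, Set.mem_insert_iff, Set.mem_singleton_iff] at ht
        rcases ht with rfl | rfl | rfl
        · simp [t1] at hsrc
        · simp [t2] at hsrc
        · have := (ih _).1 ⟨c, hr, hc⟩
          rw [key] at this
          intro y hy
          rcases List.mem_cons.1 hy with rfl | hy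
          · exact hn 0 (by simp [t3])
          · exact this y hy
    · intro h
      obtain ⟨c, hr, hc⟩ := (ih (t3.apply f x.2)).2 (by
        rw [key]; exact fun y hy => h y (List.mem_cons_of_mem _ hy))
      refine ⟨c, RsA.Run.cons ⟨t3, by simp [B], rfl, rfl, by simp [t3], ?_, rfl⟩ hr, hc⟩
      intro r hr
      have : r = 0 := by simpa [t3] using hr
      subst this
      exact h x (by simp)

theorem B_zero (f : ℕ → Finset ℕ) (w : DataWord Unit) :
    (∃ c, B.Run (0, f) w c ∧ c.1 = 1) ↔
      ∃ u d v, w = u ++ d :: v ∧ d.2 ∉ f 0 ∧ (∀ x ∈ u, x.2 ≠ d.2) ∧ (∀ x ∈ v, x.2 ≠ d.2) := by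
  induction w generalizing f with
  | nil =>
    constructor
    · rintro ⟨c, hr, hc⟩
      cases hr
      simp at hc
    · rintro ⟨u, d, v, h, -⟩
      simp at h
  | cons x w ih =>
    have key1 : (t1.apply f x.2) 0 = f 0 ∪ {x.2} := by
      ext y; simp [RsATrans.apply, t1]
    have key2 : (t2.apply f x.2) 0 = {x.2} := by
      ext y; simp [RsATrans.apply, t2]
    constructor
    · rintro ⟨c, hr, hc⟩
      cases hr with
      | cons hs hr =>
        obtain ⟨t, ht, hsrc, -, -, hn, rfl⟩ := hs
        simp only [B, Set.mem_insert_iff, Set.mem_singleton_iff] at ht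
        rcases ht with rfl | rfl | rfl
        · obtain ⟨u, d, v, rfl, h1, h2, h3⟩ := (ih _).1 ⟨c, hr, hc⟩
          rw [key1] at h1
          simp only [Finset.mem_union, Finset.mem_singleton, not_or] at h1
          refine ⟨x :: u, d, v, rfl, h1.1, ?_, h3⟩
          intro y hy
          rcases List.mem_cons.1 hy with rfl | hy
          · exact fun h => h1.2 h.symm
          · exact h2 y hy
        · have := (B_one _ _).1 ⟨c, hr, hc⟩
          rw [key2] at this
          refine ⟨[], x, w, rfl, hn 0 (by simp [t2]), by simp, ?_⟩
          intro y hy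
          simpa using this y hy
        · simp [t3] at hsrc
    · rintro ⟨u, d, v, h, h1, h2, h3⟩
      cases u with
      | nil =>
        simp only [List.nil_append, List.cons.injEq] at h
        obtain ⟨rfl, rfl⟩ := h
        obtain ⟨c, hr, hc⟩ := (B_one (t2.apply f x.2) w).2 (by
          rw [key2]; intro y hy; simpa using h3 y hy)
        refine ⟨c, RsA.Run.cons ⟨t2, by simp [B], rfl, rfl, by simp [t2], ?_, rfl⟩ hr, hc⟩
        intro r hr
        have : r = 0 := by simpa [t2] using hr
        subst this
        exact h1
      | cons y u =>
        simp only [List.cons_append, List.cons.injEq] at h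
        obtain ⟨rfl, rfl⟩ := h
        obtain ⟨c, hr, hc⟩ := (ih (t1.apply f x.2)).2 ⟨u, d, v, rfl, by
          rw [key1]
          have := h2 x (by simp)
          simp only [Finset.mem_union, Finset.mem_singleton, not_or]
          exact ⟨h1, fun h => this h.symm⟩,
          fun y hy => h2 y (List.mem_cons_of_mem _ hy), h3⟩
        exact ⟨c, RsA.Run.cons ⟨t1, by simp [B], rfl, rfl, by simp [t1], by simp [t1], rfl⟩ hr, hc⟩

theorem mem_neg_iff (w : DataWord Unit) : w ∈ LnegAllRep ↔
    ∃ u d v, w = u ++ d :: v ∧ (∀ x ∈ u, x.2 ≠ d.2) ∧ (∀ x ∈ v, x.2 ≠ d.2) := by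
  constructor
  · rintro ⟨⟨i, hi⟩, h⟩
    refine ⟨w.take i, w[i], w.drop (i+1), ?_, ?_, ?_⟩
    · rw [List.getElem_cons_drop, List.take_append_drop]
    · intro x hx
      obtain ⟨j, hj, rfl⟩ := List.mem_take_iff_getElem.1 hx
      have hj' : j < i ∧ j < w.length := by omega
      have := h ⟨j, hj'.2⟩ (by simp; omega)
      exact fun e => this (by simpa using e.symm)
    · intro x hx
      obtain ⟨j, hj, rfl⟩ := List.mem_drop_iff_getElem.1 hx
      have := h ⟨i + 1 + j, by omega⟩ (by simp; omega)
      exact fun e => this (by simpa using e.symm)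
  · rintro ⟨u, d, v, rfl, h1, h2⟩
    refine ⟨⟨u.length, by simp⟩, ?_⟩
    rintro ⟨j, hj⟩ hne
    have hne : u.length ≠ j := by simpa using hne
    simp only [List.get_eq_getElem, List.getElem_append_right (le_refl _), Nat.sub_self,
      List.getElem_cons_zero]
    rcases lt_or_gt_of_ne hne with hlt | hlt
    · rw [List.getElem_append_right hlt.le]
      obtain ⟨k, rfl⟩ : ∃ k, j = u.length + (k + 1) := ⟨j - u.length - 1, by omega⟩
      simp only [Nat.add_sub_cancel_left, List.getElem_cons_succ]
      exact (h2 _ (List.getElem_mem _)).symm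
    · rw [List.getElem_append_left hlt]
      exact (h1 _ (List.getElem_mem _)).symm

theorem B_lang : B.Lang = LnegAllRep := by
  ext w
  rw [mem_neg_iff]
  have := B_zero (fun _ => ∅) w
  simp only [Finset.notMem_empty, not_false_eq_true, true_and] at this
  rw [← this]
  simp [RsA.Lang, B]

theorem compl_eq : LallRep = LnegAllRepᶜ := by
  ext w
  simp [LallRep, LnegAllRep]

/-! ### Ramsey for triangles -/

theorem ramsey {κ : Type} [DecidableEq κ] (C : Finset κ) :
    ∃ N : ℕ, ∀ (S : Finset ℕ) (f : ℕ → ℕ → κ), N ≤ S.card →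
      (∀ i ∈ S, ∀ j ∈ S, i < j → f i j ∈ C) →
      ∃ i ∈ S, ∃ j ∈ S, ∃ k ∈ S, i < j ∧ j < k ∧ f i j = f i k ∧ f i j = f j k := by
  induction hn : C.card generalizing C with
  | zero =>
    refine ⟨2, fun S f hS hf => ?_⟩
    obtain ⟨a, ha, b, hb, hab⟩ := Finset.one_lt_card.1 (show 1 < S.card by omega)
    have hC := Finset.card_eq_zero.1 hn
    subst hC
    rcases lt_or_gt_of_ne hab with h | h
    · exact absurd (hf a ha b hb h) (by simp)
    · exact absurd (hf b hb a ha h) (by simp)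
  | succ n ih =>
    choose N hN using ih
    let g : κ → ℕ := fun c => if h : (C.erase c).card = n then N (C.erase c) h else 0
    let M := C.sup g
    refine ⟨C.card * (M + 1) + 2, fun S f hS hf => ?_⟩
    have hne : S.Nonempty := Finset.card_pos.1 (by omega)
    let m := S.min' hne
    have hm : m ∈ S := S.min'_mem hne
    have hlt : ∀ j ∈ S.erase m, m < j := fun j hj =>
      S.min'_lt_of_mem_erase_min' hne hj
    have hcard : C.card * (M + 1) < (S.erase m).card := by
      rw [Finset.card_erase_of_mem hm]; omega
    obtain ⟨c, hc, hcc⟩ := Finset.exists_lt_card_fiber_of_mul_lt_card_of_maps_to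
      (f := f m) (fun j hj => hf m hm j (Finset.mem_of_mem_erase hj) (hlt j hj)) hcard
    set S' := (S.erase m).filter (fun j => f m j = c) with hS'
    have hsub : ∀ j ∈ S', j ∈ S ∧ m < j ∧ f m j = c := fun j hj => by
      have := Finset.mem_filter.1 hj
      exact ⟨Finset.mem_of_mem_erase this.1, hlt j this.1, this.2⟩
    by_cases hex : ∃ i ∈ S', ∃ j ∈ S', i < j ∧ f i j = c
    · obtain ⟨i, hi, j, hj, hij, hfc⟩ := hex
      obtain ⟨a1, a2, a3⟩ := hsub i hi
      obtain ⟨b1, b2, b3⟩ := hsub j hj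
      exact ⟨m, hm, i, a1, j, b1, a2, hij, by rw [a3, b3], by rw [a3, hfc]⟩
    · push Not at hex
      have he : (C.erase c).card = n := by rw [Finset.card_erase_of_mem hc]; omega
      have hg : N (C.erase c) he ≤ M := by
        have : g c ≤ M := Finset.le_sup hc
        simpa [g, he] using this
      obtain ⟨i, hi, j, hj, k, hk, h⟩ := hN (C.erase c) he S' f (by omega) (by
        intro i hi j hj hij
        exact Finset.mem_erase.2 ⟨hex i hi j hj hij,
          hf i (hsub i hi).1 j (hsub j hj).1 hij⟩)
      exact ⟨i, (hsub i hi).1, j, (hsub j hj).1, k, (hsub k hk).1, h⟩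

/-! ### Type abstraction of runs -/

section
variable (R : Finset ℕ)

/-- effect of a transition on the type of a non-input value -/
def Tr (t : RsATrans Unit) (S : Set R) : Set R := {r | ∃ r' ∈ S, some r'.1 ∈ t.upd r.1}

/-- registers receiving the input value -/
def In (t : RsATrans Unit) : Set R := {r | none ∈ t.upd r.1}

open Classical in
noncomputable def stp (σ : ℕ → Set R) (p : RsATrans Unit × ℕ) : ℕ → Set R :=
  fun x => Tr R p.1 (σ x) ∪ (if x = p.2 then In R p.1 else ∅)

noncomputable def fld (σ : ℕ → Set R) (l : List (RsATrans Unit × ℕ)) : ℕ → Set R :=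
  l.foldl (stp R) σ

def est (q : ℕ) (l : List (RsATrans Unit × ℕ)) : ℕ := l.foldl (fun _ p => p.1.tgt) q

def cmp (l : List (RsATrans Unit × ℕ)) (S : Set R) : Set R :=
  l.foldl (fun S p => Tr R p.1 S) S

def Grd (t : RsATrans Unit) (S : Set R) : Prop :=
  ∀ r : R, (r.1 ∈ t.gIn → r ∈ S) ∧ (r.1 ∈ t.gNin → r ∉ S)

def Valid (D : Set (RsATrans Unit)) :
    ℕ → (ℕ → Set R) → List (RsATrans Unit × ℕ) → Prop
  | _, _, [] => True
  | q, σ, p :: l => p.1 ∈ D ∧ p.1.src = q ∧ Grd R p.1 (σ p.2) ∧ Valid D p.1.tgt (stp R σ p) l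

variable {R} {D : Set (RsATrans Unit)}

theorem valid_append (q : ℕ) (σ : ℕ → Set R) (l1 l2 : List (RsATrans Unit × ℕ)) :
    Valid R D q σ (l1 ++ l2) ↔ Valid R D q σ l1 ∧ Valid R D (est q l1) (fld R σ l1) l2 := by
  induction l1 generalizing q σ with
  | nil => simp [Valid, est, fld]
  | cons p l ih => simp [Valid, ih, est, fld, and_assoc]

theorem est_append (q : ℕ) (l1 l2 : List (RsATrans Unit × ℕ)) :
    est q (l1 ++ l2) = est (est q l1) l2 := by simp [est]

theorem fld_append (σ : ℕ → Set R) (l1 l2 : List (RsATrans Unit × ℕ)) :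
    fld R σ (l1 ++ l2) = fld R (fld R σ l1) l2 := by simp [fld]

theorem cmp_append (l1 l2 : List (RsATrans Unit × ℕ)) (S : Set R) :
    cmp R (l1 ++ l2) S = cmp R l2 (cmp R l1 S) := by simp [cmp]

theorem cmp_empty (l : List (RsATrans Unit × ℕ)) : cmp R l ∅ = ∅ := by
  induction l with
  | nil => rfl
  | cons p l ih =>
    have : Tr R p.1 ∅ = ∅ := by simp [Tr]
    simp only [cmp, List.foldl_cons, this]
    exact ih

theorem fld_notMem (σ : ℕ → Set R) (l : List (RsATrans Unit × ℕ)) (x : ℕ)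
    (hx : x ∉ l.map Prod.snd) : fld R σ l x = cmp R l (σ x) := by
  induction l generalizing σ with
  | nil => rfl
  | cons p l ih =>
    simp only [List.map_cons, List.mem_cons, not_or] at hx
    have := ih (stp R σ p) hx.2
    simp only [fld, cmp, List.foldl_cons] at this ⊢
    rw [this]
    simp [stp, hx.1]

/-- renaming of data values -/
def ren (π : ℕ → ℕ) (l : List (RsATrans Unit × ℕ)) : List (RsATrans Unit × ℕ) :=
  l.map fun p => (p.1, π p.2)

theorem est_ren (π : ℕ → ℕ) (q : ℕ) (l : List (RsATrans Unit × ℕ)) :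
    est q (ren π l) = est q l := by simp [est, ren, List.foldl_map]

theorem cmp_ren (π : ℕ → ℕ) (l : List (RsATrans Unit × ℕ)) :
    cmp R (ren π l) = cmp R l := by
  funext S; simp [cmp, ren, List.foldl_map]

theorem valid_ren (π : ℕ → ℕ) (hπ : Function.Injective π) (q : ℕ) (σ σ' : ℕ → Set R)
    (l : List (RsATrans Unit × ℕ)) (h : ∀ x ∈ l.map Prod.snd, σ' (π x) = σ x)
    (hv : Valid R D q σ l) : Valid R D q σ' (ren π l) := by
  induction l generalizing q σ σ' with
  | nil => trivial
  | cons p l ih =>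
    obtain ⟨h1, h2, h3, h4⟩ := hv
    refine ⟨h1, h2, ?_, ih _ _ _ ?_ h4⟩
    · have := h p.2 (by simp)
      simpa [this] using h3
    · intro x hx
      simp [stp, h x (by simp at hx ⊢; exact Or.inr hx), hπ.eq_iff]

theorem ren_id (l : List (RsATrans Unit × ℕ)) : ren id l = l := by simp [ren]

theorem valid_congr (q : ℕ) (σ σ' : ℕ → Set R)
    (l : List (RsATrans Unit × ℕ)) (h : ∀ x ∈ l.map Prod.snd, σ' x = σ x)
    (hv : Valid R D q σ l) : Valid R D q σ' l := by
  have := valid_ren id Function.injective_id q σ σ' l h hv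
  rwa [ren_id] at this

theorem fld_congr (σ σ' : ℕ → Set R) (l : List (RsATrans Unit × ℕ)) (x : ℕ) (h : σ' x = σ x) :
    fld R σ' l x = fld R σ l x := by
  induction l generalizing σ σ' with
  | nil => exact h
  | cons p l ih =>
    simp only [fld, List.foldl_cons]
    exact ih _ _ (by simp [stp, h])

/-- the pumping argument -/
theorem pump (q N : ℕ) (u v z : List (RsATrans Unit × ℕ))
    (hval : Valid R D q (fun _ => ∅) (u ++ v ++ z))
    (hN : ∀ x ∈ (u ++ v ++ z).map Prod.snd, x < N)
    (huv : ∀ x ∈ v.map Prod.snd, x ∉ u.map Prod.snd)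
    (hst : est (est q u) v = est q u)
    (hid : ∀ S, cmp R v (cmp R v S) = cmp R v S) :
    Valid R D q (fun _ => ∅) (u ++ ren (· + N) v ++ v ++ z) ∧
      est q (u ++ ren (· + N) v ++ v ++ z) = est q (u ++ v ++ z) := by
  have hest : est q (u ++ ren (· + N) v) = est q u := by
    rw [est_append, est_ren, hst]
  have hest2 : est q (u ++ ren (· + N) v ++ v) = est q (u ++ v) := by
    rw [est_append, hest, est_append]
  refine ⟨?_, by rw [est_append, hest2, ← est_append]⟩
  rw [valid_append, valid_append] at hval
  obtain ⟨⟨hu, hv⟩, hz⟩ := hval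
  set σ := fld R (fun _ => ∅) u with hσ
  have hσ0 : ∀ x, x ∉ u.map Prod.snd → σ x = ∅ := fun x hx => by
    rw [hσ, fld_notMem _ _ _ hx, cmp_empty]
  have hvσ : ∀ x ∈ v.map Prod.snd, σ x = ∅ := fun x hx => hσ0 x (huv x hx)
  have hbig : ∀ x, σ (x + N) = ∅ := fun x => by
    apply hσ0
    intro hx
    have := hN (x + N) (by simp only [List.map_append, List.mem_append]; tauto)
    omega
  have hren : ∀ x, x < N → x ∉ (ren (· + N) v).map Prod.snd := fun x hx hm => by
    simp only [ren, List.map_map, List.mem_map, Function.comp] at hm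
    obtain ⟨p, -, hp⟩ := hm
    omega
  have hmid : ∀ x, x < N → fld R σ (ren (· + N) v) x = cmp R v (σ x) := fun x hx => by
    rw [fld_notMem _ _ _ (hren x hx), cmp_ren]
  have hmidv : ∀ x ∈ v.map Prod.snd, fld R σ (ren (· + N) v) x = σ x := fun x hx => by
    rw [hmid x (hN x (by simp only [List.map_append, List.mem_append]; tauto)), hvσ x hx,
      cmp_empty]
  rw [valid_append, valid_append, valid_append, hest, hest2, fld_append, fld_append, ← hσ]
  refine ⟨⟨⟨hu, ?_⟩, ?_⟩, ?_⟩
  · refine valid_ren _ (add_left_injective N) _ σ σ v ?_ hv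
    intro x hx
    rw [hvσ x hx]; exact hbig x
  · exact valid_congr _ σ _ v hmidv hv
  · refine valid_congr _ _ _ z ?_ hz
    intro x hx
    have hxN := hN x (by simp only [List.map_append, List.mem_append]; tauto)
    rw [fld_append _ u v, fld_append _ u (ren _ v), ← hσ]
    by_cases hxv : x ∈ v.map Prod.snd
    · exact fld_congr _ _ _ _ (hmidv x hxv)
    · rw [fld_notMem _ _ _ hxv, fld_notMem _ _ _ hxv, hmid x hxN, hid]

end

/-! ### Runs versus valid lists -/

def ty (R : Finset ℕ) (f : ℕ → Finset ℕ) : ℕ → Set R := fun x => {r | x ∈ f r.1}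

theorem ty_apply (A : RsA Unit) (t : RsATrans Unit) (ht : t ∈ A.Δ) (f : ℕ → Finset ℕ) (d : ℕ) :
    ty A.R (t.apply f d) = stp A.R (ty A.R f) (t, d) := by
  funext x
  ext r
  simp only [ty, Set.mem_ofPred_eq, RsATrans.apply, Finset.mem_biUnion, stp, Set.mem_union, Tr, In]
  constructor
  · rintro ⟨o, ho, hx⟩
    cases o with
    | none =>
      right
      have : x = d := by simpa using hx
      simp [this, ho]
    | some r' =>
      left
      exact ⟨⟨r', (A.wf t ht).2.2.2.2.2 r.1 r.2 r' ho⟩, hx, ho⟩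
  · rintro (⟨r', h1, h2⟩ | h)
    · exact ⟨some r'.1, h2, h1⟩
    · split_ifs at h with hx
      · exact ⟨none, h, by simp [hx]⟩
      · exact absurd h (by simp)

theorem grd_iff (A : RsA Unit) (t : RsATrans Unit) (ht : t ∈ A.Δ) (f : ℕ → Finset ℕ) (d : ℕ) :
    Grd A.R t (ty A.R f d) ↔ (∀ r ∈ t.gIn, d ∈ f r) ∧ (∀ r ∈ t.gNin, d ∉ f r) := by
  obtain ⟨-, -, h1, h2, -⟩ := A.wf t ht
  constructor
  · intro h
    exact ⟨fun r hr => (h ⟨r, h1 hr⟩).1 hr, fun r hr => (h ⟨r, h2 hr⟩).2 hr⟩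
  · rintro ⟨a, b⟩ r
    exact ⟨fun hr => a _ hr, fun hr => b _ hr⟩

theorem run_to_valid (A : RsA Unit) (c c' : ℕ × (ℕ → Finset ℕ)) (w : DataWord Unit)
    (h : A.Run c w c') : ∃ l : List (RsATrans Unit × ℕ), l.map Prod.snd = w.map Prod.snd ∧
      Valid A.R A.Δ c.1 (ty A.R c.2) l ∧ est c.1 l = c'.1 := by
  induction h with
  | nil c => exact ⟨[], rfl, trivial, rfl⟩
  | @cons c c' c'' x w hs hr ih =>
    obtain ⟨l, h1, h2, h3⟩ := ih
    obtain ⟨t, ht, hsrc, -, hg, hn, rfl⟩ := hs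
    refine ⟨(t, x.2) :: l, by simp [h1], ⟨ht, hsrc, (grd_iff A t ht _ _).2 ⟨hg, hn⟩, ?_⟩, h3⟩
    rw [← ty_apply A t ht]
    exact h2

theorem valid_to_run (A : RsA Unit) (q : ℕ) (f : ℕ → Finset ℕ) (l : List (RsATrans Unit × ℕ))
    (h : Valid A.R A.Δ q (ty A.R f) l) :
    ∃ f', A.Run (q, f) (l.map fun p => ((), p.2)) (est q l, f') := by
  induction l generalizing q f with
  | nil => exact ⟨f, RsA.Run.nil _⟩
  | cons p l ih =>
    obtain ⟨h1, h2, h3, h4⟩ := h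
    rw [← ty_apply A p.1 h1] at h4
    obtain ⟨f', hf'⟩ := ih _ _ h4
    obtain ⟨a, b⟩ := (grd_iff A p.1 h1 _ _).1 h3
    exact ⟨f', RsA.Run.cons ⟨p.1, h1, h2, rfl, a, b, rfl⟩ hf'⟩

theorem est_mem (A : RsA Unit) (q : ℕ) (hq : q ∈ A.Q) (σ : ℕ → Set A.R)
    (l : List (RsATrans Unit × ℕ)) (h : Valid A.R A.Δ q σ l) : est q l ∈ A.Q := by
  induction l generalizing q σ with
  | nil => exact hq
  | cons p l ih =>
    obtain ⟨h1, h2, h3, h4⟩ := h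
    exact ih _ (A.wf _ h1).2.1 _ h4

theorem seg (l : List (RsATrans Unit × ℕ)) {i j : ℕ} (hij : i ≤ j) :
    l.take j = l.take i ++ (l.take j).drop i := by
  conv_lhs => rw [← List.take_append_drop i (l.take j)]
  rw [List.take_take, min_eq_left hij]

theorem seg2 (l : List (RsATrans Unit × ℕ)) {i j k : ℕ} (hij : i ≤ j) (hjk : j ≤ k)
    (hk : k ≤ l.length) :
    (l.take k).drop i = (l.take j).drop i ++ (l.take k).drop j := by
  conv_lhs => rw [seg l hjk]
  rw [List.drop_append_of_le_length (by simp; omega)]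

theorem dup_word_mem (n : ℕ) :
    ((List.range n ++ List.range n).map fun d => ((), d)) ∈ LallRep := by
  rw [compl_eq, Set.mem_compl_iff, mem_neg_iff]
  rintro ⟨u, d, v, h, h1, h2⟩
  have hc := congrArg (fun l => (l.map Prod.snd).count d.2) h
  have hu : (u.map Prod.snd).count d.2 = 0 := List.count_eq_zero.2 (by
    intro hm
    obtain ⟨x, hx, e⟩ := List.mem_map.1 hm
    exact h1 x hx e)
  have hv : (v.map Prod.snd).count d.2 = 0 := List.count_eq_zero.2 (by
    intro hm
    obtain ⟨x, hx, e⟩ := List.mem_map.1 hm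
    exact h2 x hx e)
  simp only [List.map_map, List.map_append, List.map_cons, List.count_append, hu, hv,
    List.count_cons_self] at hc
  omega

theorem not_rec (A : RsA Unit) (hA : A.Lang = LallRep) : False := by
  classical
  obtain ⟨n, hn⟩ := ramsey ((Finset.univ : Finset (Set A.R → Set A.R)) ×ˢ A.Q)
  have hw := dup_word_mem n
  rw [← hA] at hw
  obtain ⟨q, hq, c, hrun, hF⟩ := hw
  obtain ⟨l, hl, hval, hest⟩ := run_to_valid A _ _ _ hrun
  have hl : l.map Prod.snd = List.range n ++ List.range n := by
    rw [hl, List.map_map]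
    exact List.map_id _
  have hty : ty A.R (fun _ => ∅) = fun _ => ∅ := by
    funext x; simp [ty]
  simp only [hty] at hval hest
  have hlen : l.length = n + n := by
    have := congrArg List.length hl
    simpa using this
  obtain ⟨i, hi, j, hj, k, hk, hij, hjk, e1, e2⟩ := hn (Finset.range n)
    (fun i j => (cmp A.R ((l.take j).drop i), est q (l.take i))) (by simp) (by
      intro i hi j hj hij
      simp only [Finset.mem_product, Finset.mem_univ, true_and]
      have : Valid A.R A.Δ q (fun _ => ∅) (l.take i ++ l.drop i) := by
        rwa [List.take_append_drop]
      exact est_mem A q (A.I_sub hq) _ _ ((valid_append _ _ _ _).1 this).1)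
  simp only [Prod.mk.injEq, Finset.mem_range] at e1 e2 hi hj hk
  set u := l.take i with hu
  set v := (l.take j).drop i with hv
  set z := l.drop j with hz
  have huv : u ++ v = l.take j := (seg l hij.le).symm
  have hdec : u ++ v ++ z = l := by rw [huv, hz, List.take_append_drop]
  have hid : ∀ S, cmp A.R v (cmp A.R v S) = cmp A.R v S := by
    intro S
    have h1 := e1.1
    rw [seg2 l hij.le hjk.le (by omega)] at h1
    have h2 := congrFun h1 S
    rw [cmp_append, ← e2.1] at h2
    exact h2.symm
  have hst : est (est q u) v = est q u := by
    rw [← est_append, huv]; exact e2.2.symm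
  have hlt : ∀ x ∈ l.map Prod.snd, x < n := by
    intro x hx
    rw [hl] at hx
    simpa using hx
  have hnd : ((u ++ v).map Prod.snd).Nodup := by
    rw [huv, List.map_take, hl, List.take_append_of_le_length (by simp; omega)]
    exact List.nodup_range.sublist (List.take_sublist _ _)
  rw [List.map_append, List.nodup_append] at hnd
  obtain ⟨-, hndv, hdis⟩ := hnd
  obtain ⟨hV, hE⟩ := pump (D := A.Δ) q n u v z (by rwa [hdec]) (by rwa [hdec])
    (fun x hx hx' => hdis x hx' x hx rfl) hst hid
  rw [← hty] at hV
  obtain ⟨f', hf'⟩ := valid_to_run A _ _ _ hV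
  rw [hE, hdec] at hf'
  have hmem : ((u ++ ren (· + n) v ++ v ++ z).map fun p => ((), p.2)) ∈ A.Lang :=
    ⟨q, hq, _, hf', by simpa [hest] using hF⟩
  rw [hA, compl_eq, Set.mem_compl_iff, mem_neg_iff] at hmem
  apply hmem
  have hvlen : v.length = j - i := by simp [hv]; omega
  obtain ⟨p, v', hpv⟩ : ∃ p v', v = p :: v' := by
    cases hv0 : v with
    | nil => rw [hv0] at hvlen; simp at hvlen; omega
    | cons p v' => exact ⟨p, v', rfl⟩
  rw [← hdec] at hlt
  refine ⟨u.map fun p => ((), p.2), ((), p.2 + n),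
    (ren (· + n) v' ++ v ++ z).map fun p => ((), p.2), ?_, ?_, ?_⟩
  · conv_lhs => rw [show ren (· + n) v = (p.1, p.2 + n) :: ren (· + n) v' by rw [hpv]; rfl]
    simp
  · intro x hx
    obtain ⟨y, hy, rfl⟩ := List.mem_map.1 hx
    have := hlt y.2 (List.mem_map_of_mem (by simp [hy]))
    simp only; omega
  · intro x hx
    obtain ⟨y, hy, rfl⟩ := List.mem_map.1 hx
    rw [List.append_assoc, List.mem_append] at hy
    rcases hy with hy | hy
    · obtain ⟨y', hy', rfl⟩ := List.mem_map.1 hy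
      rw [hpv, List.map_cons, List.nodup_cons] at hndv
      intro e
      have e' : y'.2 = p.2 := by simpa using e
      exact hndv.1 (e' ▸ List.mem_map_of_mem hy')
    · have := hlt y.2 (List.mem_map_of_mem (by
        rw [List.append_assoc]; exact List.mem_append_right _ hy))
      simp only; omega

end RsAProof

/-- RsA languages are not closed under complement: over the unary
alphabet, `LnegAllRep` is recognized by an RsA with one register, `LallRep` is its
complement, and no RsA recognizes `LallRep`. -/
theorem rsa_not_closed_under_complement :
    (∃ A : RsA Unit, A.R.card = 1 ∧ RsA.Lang A = LnegAllRep) ∧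
    LallRep = LnegAllRepᶜ ∧
    ¬ ∃ A : RsA Unit, RsA.Lang A = LallRep :=
  ⟨⟨RsAProof.B, rfl, RsAProof.B_lang⟩, RsAProof.compl_eq,
    fun ⟨A, hA⟩ => RsAProof.not_rec A hA⟩
end

section
/- For each n ∈ ℕ with n ≥ 1, the class of languages recognized by register set automata with at most n registers is not closed under intersection: there exist data-word languages L₁ and L₂, each recognized by an RsA with at most n registers, such that L₁ ∩ L₂ is not recognized by any RsA with at most n registers. -/
/-- Transition number `k` of a straight-line automaton. -/
def slTrans {Sigma : Type} (S gI gN : ℕ → Finset ℕ) (k : ℕ) (a : Sigma) : RsATrans Sigma where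
  src := k
  letter := a
  gIn := gI k
  gNin := gN k
  upd := fun r => if r ∈ S k then {some r, none} else {some r}
  tgt := k + 1

/-- A straight-line automaton with states `0, …, N`. -/
def slAut (Sigma : Type) [Fintype Sigma] (n N : ℕ) (S gI gN : ℕ → Finset ℕ)
    (hI : ∀ k, gI k ⊆ Finset.range n) (hN : ∀ k, gN k ⊆ Finset.range n)
    (hd : ∀ k, Disjoint (gI k) (gN k)) : RsA Sigma where
  Q := Finset.range (N + 1)
  R := Finset.range n
  Δ := Set.range (fun p : Fin N × Sigma => slTrans S gI gN p.1 p.2)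
  I := {0}
  F := {N}
  finite_trans := Set.toFinite _
  I_sub := by simp
  F_sub := by simp
  wf := by
    rintro t ⟨⟨⟨k, hk⟩, a⟩, rfl⟩
    refine ⟨by simp [slTrans]; omega, by simp [slTrans]; omega, hI k, hN k, hd k, ?_⟩
    intro r hr r' h
    have : r' = r := by
      simp only [slTrans] at h
      split_ifs at h <;> simpa using h
    rw [this]; exact hr

/-- Register contents after reading `v 0, …, v (k-1)`. -/
def slConf (S : ℕ → Finset ℕ) (v : ℕ → ℕ) : ℕ → ℕ → Finset ℕ
  | 0 => fun _ => ∅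
  | k + 1 => fun r => if r ∈ S k then insert (v k) (slConf S v k r) else slConf S v k r

lemma mem_slConf (S : ℕ → Finset ℕ) (v : ℕ → ℕ) (k r d : ℕ) :
    d ∈ slConf S v k r ↔ ∃ i < k, r ∈ S i ∧ v i = d := by
  induction k with
  | zero => simp [slConf]
  | succ k ih =>
    have : (∃ i < k + 1, r ∈ S i ∧ v i = d) ↔
        (r ∈ S k ∧ v k = d) ∨ ∃ i < k, r ∈ S i ∧ v i = d := by
      constructor
      · rintro ⟨i, hi, h⟩
        rcases Nat.lt_succ_iff_lt_or_eq.1 hi with h' | rfl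
        · exact Or.inr ⟨i, h', h⟩
        · exact Or.inl h
      · rintro (h | ⟨i, hi, h⟩)
        · exact ⟨k, by omega, h⟩
        · exact ⟨i, by omega, h⟩
    rw [this, ← ih]
    simp only [slConf]
    split_ifs with h
    · simp [h, eq_comm]
    · simp [h]

lemma slTrans_apply {Sigma : Type} (S gI gN : ℕ → Finset ℕ) (v : ℕ → ℕ) (k : ℕ) (a : Sigma) :
    (slTrans S gI gN k a).apply (slConf S v k) (v k) = slConf S v (k + 1) := by
  funext r
  ext d
  simp only [RsATrans.apply, slTrans, slConf]
  split_ifs with h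
  · simp
  · simp

/-- The guards at position `j` hold. -/
def slOk (S gI gN : ℕ → Finset ℕ) (v : ℕ → ℕ) (j : ℕ) : Prop :=
  (∀ r ∈ gI j, v j ∈ slConf S v j r) ∧ (∀ r ∈ gN j, v j ∉ slConf S v j r)

/-- The word with data `v k, …, v (k+len-1)`. -/
def slWord {Sigma : Type} (a : Sigma) (v : ℕ → ℕ) (k len : ℕ) : DataWord Sigma :=
  (List.range' k len).map fun i => (a, v i)

lemma slAut_run {Sigma : Type} [Fintype Sigma] (n N : ℕ) (S gI gN : ℕ → Finset ℕ)
    (hI hN hd) (a : Sigma) (v : ℕ → ℕ) (len : ℕ) : ∀ k, k + len ≤ N →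
    (∀ j, k ≤ j → j < k + len → slOk S gI gN v j) →
    (slAut Sigma n N S gI gN hI hN hd).Run (k, slConf S v k) (slWord a v k len)
      (k + len, slConf S v (k + len)) := by
  induction len with
  | zero => intro k _ _; exact RsA.Run.nil _
  | succ len ih =>
    intro k hk h
    have h1 := ih (k + 1) (by omega) (fun j hj hj' => h j (by omega) (by omega))
    rw [show k + 1 + len = k + (len + 1) by omega] at h1
    have hok := h k (by omega) (by omega)
    refine RsA.Run.cons ?_ h1
    refine ⟨slTrans S gI gN k a, ⟨(⟨k, by omega⟩, a), rfl⟩, rfl, rfl, hok.1, hok.2, ?_⟩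
    simp only [slTrans_apply]
    rfl

lemma slAut_run_ok {Sigma : Type} [Fintype Sigma] (n N : ℕ) (S gI gN : ℕ → Finset ℕ)
    (hI hN hd) (a : Sigma) (v : ℕ → ℕ) (len : ℕ) : ∀ k c,
    (slAut Sigma n N S gI gN hI hN hd).Run (k, slConf S v k) (slWord a v k len) c →
    ∀ j, k ≤ j → j < k + len → slOk S gI gN v j := by
  induction len with
  | zero => intro k c _ j h1 h2; omega
  | succ len ih =>
    intro k c h
    have hw : slWord a v k (len + 1) = (a, v k) :: slWord a v (k + 1) len := by
      simp [slWord, List.range'_succ]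
    rw [hw] at h
    cases h with
    | cons hs hr =>
      obtain ⟨t, ⟨⟨⟨k', hk'⟩, b⟩, rfl⟩, h1, h2, h3, h4, rfl⟩ := hs
      have hk : k' = k := h1
      subst hk
      simp only [slTrans_apply] at hr
      have := ih (k' + 1) c hr
      intro j hj1 hj2
      rcases Nat.eq_or_lt_of_le hj1 with rfl | hlt
      · exact ⟨h3, h4⟩
      · exact this j hlt (by omega)

lemma slAut_mem {Sigma : Type} [Fintype Sigma] (n N : ℕ) (S gI gN : ℕ → Finset ℕ)
    (hI hN hd) (a : Sigma) (v : ℕ → ℕ) :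
    slWord a v 0 N ∈ (slAut Sigma n N S gI gN hI hN hd).Lang ↔
      ∀ j < N, slOk S gI gN v j := by
  constructor
  · rintro ⟨q, hq, c, hr, -⟩ j hj
    have : q = 0 := by simpa [slAut] using hq
    subst this
    exact slAut_run_ok n N S gI gN hI hN hd a v N 0 c hr j (by omega) (by omega)
  · intro h
    have := slAut_run n N S gI gN hI hN hd a v N 0 (by omega) (fun j _ hj => h j (by omega))
    exact ⟨0, by simp [slAut], _, this, by simp [slAut]⟩

lemma RsA.Run.split {Sigma : Type} {A : RsA Sigma} (u w : DataWord Sigma) : ∀ c c',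
    A.Run c (u ++ w) c' → ∃ d, A.Run c u d ∧ A.Run d w c' := by
  induction u with
  | nil => intro c c' h; exact ⟨c, RsA.Run.nil _, h⟩
  | cons x u ih =>
    intro c c' h
    cases h with
    | cons hs hr =>
      obtain ⟨d, h1, h2⟩ := ih _ _ hr
      exact ⟨d, RsA.Run.cons hs h1, h2⟩

lemma RsA.Run.append {Sigma : Type} {A : RsA Sigma} {u w : DataWord Sigma} {c d c'}
    (h : A.Run c u d) (h' : A.Run d w c') : A.Run c (u ++ w) c' := by
  induction h with
  | nil => exact h'
  | cons hs _ ih => exact RsA.Run.cons hs (ih h')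

lemma RsA.Run.perm {Sigma : Type} {A : RsA Sigma} (π : Equiv.Perm ℕ) (w : DataWord Sigma) :
    ∀ (q : ℕ) (f f' : ℕ → Finset ℕ) c, (∀ r ∈ A.R, ∀ d, d ∈ f r ↔ π d ∈ f' r) →
    A.Run (q, f) w c →
    ∃ g', A.Run (q, f') (w.map fun x => (x.1, π x.2)) (c.1, g') := by
  induction w with
  | nil =>
    intro q f f' c _ h
    cases h
    exact ⟨f', RsA.Run.nil _⟩
  | cons x w ih =>
    intro q f f' c hf h
    cases h with
    | cons hs hr =>
      obtain ⟨t, ht, h1, h2, h3, h4, rfl⟩ := hs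
      obtain ⟨-, -, w1, w2, -, w3⟩ := A.wf t ht
      have hrel : ∀ r ∈ A.R, ∀ d, d ∈ t.apply f x.2 r ↔ π d ∈ t.apply f' (π x.2) r := by
        intro r hr d
        simp only [RsATrans.apply, Finset.mem_biUnion]
        refine exists_congr fun o => and_congr_right fun ho => ?_
        cases o with
        | none => simp
        | some r' => exact hf r' (w3 r hr r' ho) d
      obtain ⟨g', hg⟩ := ih _ _ _ _ hrel hr
      refine ⟨g', RsA.Run.cons ⟨t, ht, h1, h2, ?_, ?_, rfl⟩ hg⟩
      · intro r hr
        exact (hf r (w1 hr) _).1 (h3 r hr)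
      · intro r hr hc
        exact h4 r hr ((hf r (w2 hr) _).2 hc)

/-- Bits of `k` below `n`. -/
def slBits (n k : ℕ) : Finset ℕ := (Finset.range n).filter fun r => k.testBit r = true

/-- Complementary bits of `k` below `n`. -/
def slCobits (n k : ℕ) : Finset ℕ := (Finset.range n).filter fun r => ¬ k.testBit r = true

lemma slBits_inj {n i d : ℕ} (hi : i < 2 ^ n) (hd : d < 2 ^ n)
    (h : ∀ r < n, i.testBit r = d.testBit r) : i = d := by
  apply Nat.eq_of_testBit_eq
  intro r
  by_cases hr : r < n
  · exact h r hr
  · have hp : 2 ^ n ≤ 2 ^ r := Nat.pow_le_pow_right (by norm_num) (by omega)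
    rw [Nat.testBit_lt_two_pow (by omega), Nat.testBit_lt_two_pow (by omega)]

/-- For each `n ≥ 1`, the class of languages of RsAs with at most
`n` registers is not closed under intersection. -/
theorem rsa_n_not_closed_under_intersection (Sigma : Type) [Fintype Sigma]
    [Nonempty Sigma] (n : ℕ) (hn : 1 ≤ n) :
    ∃ L₁ L₂ : Set (DataWord Sigma),
      (∃ A₁ : RsA Sigma, A₁.R.card ≤ n ∧ RsA.Lang A₁ = L₁) ∧
      (∃ A₂ : RsA Sigma, A₂.R.card ≤ n ∧ RsA.Lang A₂ = L₂) ∧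
      ¬ ∃ A : RsA Sigma, A.R.card ≤ n ∧ RsA.Lang A = L₁ ∩ L₂ := by
  obtain ⟨a⟩ := ‹Nonempty Sigma›
  obtain ⟨m, hm⟩ : ∃ m, m = 2 ^ n := ⟨_, rfl⟩
  have hmpos : 0 < m := by rw [hm]; positivity
  let S₁ : ℕ → Finset ℕ := fun k => if k < m then slBits n k else ∅
  let I₁ : ℕ → Finset ℕ := fun k => if k < m then ∅ else slBits n (k - m)
  let N₁ : ℕ → Finset ℕ := fun k => if k < m then ∅ else slCobits n (k - m)
  let S₂ : ℕ → Finset ℕ := fun k => if k = 0 then {0} else ∅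
  let I₂ : ℕ → Finset ℕ := fun k => if k = m then {0} else ∅
  let N₂ : ℕ → Finset ℕ := fun _ => ∅
  have hI₁ : ∀ k, I₁ k ⊆ Finset.range n := by
    intro k; simp only [I₁]; split_ifs
    · simp
    · exact Finset.filter_subset _ _
  have hN₁ : ∀ k, N₁ k ⊆ Finset.range n := by
    intro k; simp only [N₁]; split_ifs
    · simp
    · exact Finset.filter_subset _ _
  have hd₁ : ∀ k, Disjoint (I₁ k) (N₁ k) := by
    intro k; simp only [I₁, N₁]; split_ifs
    · simp
    · exact Finset.disjoint_filter_filter_not _ _ _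
  have hI₂ : ∀ k, I₂ k ⊆ Finset.range n := by
    intro k; simp only [I₂]; split_ifs
    · simp; omega
    · simp
  have hN₂ : ∀ k, N₂ k ⊆ Finset.range n := by intro k; simp [N₂]
  have hd₂ : ∀ k, Disjoint (I₂ k) (N₂ k) := by intro k; simp [N₂]
  refine ⟨_, _, ⟨slAut Sigma n (m + m) S₁ I₁ N₁ hI₁ hN₁ hd₁, by simp [slAut], rfl⟩,
    ⟨slAut Sigma n (m + m) S₂ I₂ N₂ hI₂ hN₂ hd₂, by simp [slAut], rfl⟩, ?_⟩
  rintro ⟨A, hA, hL⟩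
  let V : Equiv.Perm ℕ → ℕ → ℕ := fun π i => if i < m then i else π (i - m)
  have hsplit : ∀ π : Equiv.Perm ℕ, slWord a (V π) 0 (m + m) =
      slWord a (V 1) 0 m ++ (slWord a (V 1) m m).map fun x => (x.1, π x.2) := by
    intro π
    have : List.range' 0 (m + m) = List.range' 0 m ++ List.range' m m := by
      have := @List.range'_append_1 0 m m
      simpa using this.symm
    simp only [slWord, this, List.map_append, List.map_map]
    congr 1
    · apply List.map_congr_left
      intro i hi
      have : i < m := by simp at hi; omega
      simp [V, this]
    · apply List.map_congr_left
      intro i hi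
      have : ¬ i < m := by simp at hi; omega
      simp [V, this]
  have hmem : slWord a (V 1) 0 (m + m) ∈ A.Lang := by
    rw [hL]
    constructor
    · rw [slAut_mem]
      intro j hj
      constructor
      · intro r hr
        rw [mem_slConf]
        by_cases hjm : j < m
        · simp [I₁, hjm] at hr
        · simp only [I₁, hjm, if_false] at hr
          have : j - m < m := by omega
          exact ⟨j - m, by omega, by simpa [S₁, this] using hr, by simp [V, this, hjm]⟩
      · intro r hr
        rw [mem_slConf]
        by_cases hjm : j < m
        · simp [N₁, hjm] at hr
        · simp only [N₁, hjm, if_false] at hr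
          rintro ⟨i, hi, hi1, hi2⟩
          by_cases him : i < m
          · simp only [S₁, him, if_true] at hi1
            simp only [V, him, hjm, if_true, if_false, Equiv.Perm.one_apply] at hi2
            subst hi2
            simp only [slBits, slCobits, Finset.mem_filter] at hr hi1
            exact hr.2 hi1.2
          · simp [S₁, him] at hi1
    · rw [slAut_mem]
      intro j hj
      constructor
      · intro r hr
        rw [mem_slConf]
        by_cases hjm : j = m
        · subst hjm
          simp only [I₂, if_true] at hr
          exact ⟨0, hmpos, by simpa [S₂] using hr, by simp [V, hmpos]⟩
        · simp [I₂, hjm] at hr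
      · intro r hr
        simp [N₂] at hr
  have hnot : ∀ (π : Equiv.Perm ℕ) (i : ℕ), i < m → π i ≠ i →
      slWord a (V π) 0 (m + m) ∉ A.Lang := by
    intro π i him hπ hw
    rw [hL] at hw
    obtain ⟨h1, h2⟩ := hw
    rw [slAut_mem] at h1 h2
    rcases Nat.eq_zero_or_pos i with rfl | hipos
    · have := (h2 m (by omega)).1 0 (by simp [I₂])
      rw [mem_slConf] at this
      obtain ⟨i, hi, hi1, hi2⟩ := this
      have : i = 0 := by
        by_contra hc
        simp [S₂, hc] at hi1
      subst this
      simp [V, hmpos] at hi2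
      exact hπ hi2.symm
    · obtain ⟨h3, h4⟩ := h1 (m + i) (by omega)
      have hv : V π (m + i) = π i := by simp [V]
      have hin : ∀ r < n, i.testBit r = true → π i < m ∧ (π i).testBit r = true := by
        intro r hr hb
        have := h3 r (by simp [I₁, slBits, hr, hb])
        rw [mem_slConf, hv] at this
        obtain ⟨k, hk, hk1, hk2⟩ := this
        by_cases hkm : k < m
        · simp only [V, hkm, if_true] at hk2
          subst hk2
          simp only [S₁, hkm, if_true, slBits, Finset.mem_filter] at hk1
          exact ⟨hkm, hk1.2⟩
        · simp [S₁, hkm] at hk1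
      have hlt : π i < m := by
        by_contra hc
        apply hipos.ne
        refine slBits_inj (n := n) (by positivity) (by omega) ?_
        intro r hr
        rw [Nat.zero_testBit]
        by_contra hb
        exact hc (hin r hr (by simpa using Ne.symm hb)).1
      apply hπ
      refine slBits_inj (n := n) (by omega) (by omega) ?_
      intro r hr
      by_cases hb : i.testBit r = true
      · rw [hb, (hin r hr hb).2]
      · have := h4 r (by simpa [N₁, slCobits, hr] using hb)
        rw [mem_slConf, hv] at this
        have hb' : ¬ (π i).testBit r = true := fun hc =>
          this ⟨π i, by omega, by simp [S₁, hlt, slBits, hr, hc], by simp [V, hlt]⟩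
        simp only [Bool.not_eq_true] at hb hb'
        rw [hb, hb']
  obtain ⟨q₀, hq₀, c, hrun, hc⟩ := hmem
  rw [hsplit] at hrun
  obtain ⟨⟨q, f⟩, hr1, hr2⟩ := RsA.Run.split _ _ _ _ hrun
  obtain ⟨x, hx, y, hy, hxy, hpat⟩ := Finset.exists_ne_map_eq_of_card_lt_of_maps_to
    (s := Finset.range (m + 1)) (t := A.R.powerset)
    (f := fun d => A.R.filter fun r => d ∈ f r) (by
      rw [Finset.card_powerset, Finset.card_range]
      have : 2 ^ A.R.card ≤ 2 ^ n := Nat.pow_le_pow_right (by norm_num) hA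
      omega) (by
      intro d _
      exact Finset.mem_coe.2 (Finset.mem_powerset.2 (Finset.filter_subset _ _)))
  have hpat' : ∀ r ∈ A.R, (x ∈ f r ↔ y ∈ f r) := by
    intro r hr
    have := Finset.ext_iff.1 hpat r
    simpa [hr] using this
  have hsw : ∀ r ∈ A.R, ∀ d, d ∈ f r ↔ Equiv.swap x y d ∈ f r := by
    intro r hr d
    have := hpat' r hr
    rw [Equiv.swap_apply_def]
    split_ifs with e1 e2
    · rw [e1, this]
    · rw [e2, this]
    · rfl
  have hmem' : slWord a (V (Equiv.swap x y)) 0 (m + m) ∈ A.Lang := by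
    have hid : (slWord a (V 1) m m).map (fun x => (x.1, (1 : Equiv.Perm ℕ) x.2)) =
        slWord a (V 1) m m := by simp
    rw [hid] at hr2
    obtain ⟨g', hg⟩ := RsA.Run.perm (Equiv.swap x y) _ q f f c hsw hr2
    refine ⟨q₀, hq₀, (c.1, g'), ?_, hc⟩
    rw [hsplit]
    exact hr1.append hg
  simp only [Finset.mem_range] at hx hy
  rcases Nat.lt_or_ge x m with hxm | hxm
  · exact hnot _ x hxm (by simpa using hxy.symm) hmem'
  · exact hnot _ y (by omega) (by simpa using hxy) hmem'
end

section
/- For each n ∈ ℕ with n ≥ 1, the class of languages recognized by deterministic register set automata with at most n registers is not closed under intersection: there exist data-word languages L₁ and L₂, each recognized by a DRsA with at most n registers, such that L₁ ∩ L₂ is not recognized by any DRsA with at most n registers. -/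
/-- An RsA is deterministic (a DRsA) iff any two distinct transitions from the same
state over the same letter have incompatible guards. -/
def RsA.Deterministic {Sigma : Type} (A : RsA Sigma) : Prop :=
  ∀ t₁ ∈ A.Δ, ∀ t₂ ∈ A.Δ, t₁ ≠ t₂ → t₁.src = t₂.src → t₁.letter = t₂.letter →
    (t₁.gIn ∩ t₂.gNin).Nonempty ∨ (t₂.gIn ∩ t₁.gNin).Nonempty


/-- Transition number `k` of the witness automata. -/
def witTr {Sigma : Type} (a : Sigma) (n N : ℕ) (code : ℕ → Finset ℕ) (k : ℕ) : RsATrans Sigma :=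
  if k < N then
    ⟨k, a, ∅, ∅, fun r => if r ∈ code k then {none, some r} else {some r}, k + 1⟩
  else
    ⟨k, a, code (k - N), Finset.range n \ code (k - N), fun r => {some r}, k + 1⟩

theorem witTr_src {Sigma : Type} (a : Sigma) (n N : ℕ) (code : ℕ → Finset ℕ) (k : ℕ) :
    (witTr a n N code k).src = k := by
  unfold witTr; split_ifs <;> rfl

/-- The witness automata: store the first `N` values according to `code`, then check that the next
`N` values have the right types. -/
def witA {Sigma : Type} (a : Sigma) (n N : ℕ) (code : ℕ → Finset ℕ)
    (hc : ∀ k, code k ⊆ Finset.range n) : RsA Sigma where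
  Q := Finset.range (2 * N + 1)
  R := Finset.range n
  Δ := witTr a n N code '' (Set.Iio (2 * N))
  I := {0}
  F := {2 * N}
  finite_trans := (Set.finite_Iio _).image _
  I_sub := by simp
  F_sub := by simp
  wf := by
    rintro t ⟨k, hk, rfl⟩
    simp only [Set.mem_Iio] at hk
    unfold witTr
    split_ifs with h
    · refine ⟨by simp; omega, by simp; omega, by simp, by simp, by simp, ?_⟩
      intro r hr r' h'
      dsimp only at h'
      split_ifs at h' <;> simp at h' <;> subst h' <;> exact hr
    · refine ⟨by simp; omega, by simp; omega, hc _, Finset.sdiff_subset,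
        Finset.disjoint_sdiff, ?_⟩
      intro r hr r' h'
      simp at h'
      subst h'
      exact hr

theorem witA_det {Sigma : Type} (a : Sigma) (n N : ℕ) (code : ℕ → Finset ℕ)
    (hc : ∀ k, code k ⊆ Finset.range n) : (witA a n N code hc).Deterministic := by
  rintro _ ⟨k, _, rfl⟩ _ ⟨l, _, rfl⟩ hne hs
  rw [witTr_src, witTr_src] at hs
  subst hs
  exact absurd rfl hne

theorem run_append {Sigma : Type} (A : RsA Sigma) (u v : DataWord Sigma) :
    ∀ c c'', A.Run c (u ++ v) c'' ↔ ∃ c', A.Run c u c' ∧ A.Run c' v c'' := by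
  induction u with
  | nil =>
    intro c c''
    constructor
    · intro h; exact ⟨c, .nil c, h⟩
    · rintro ⟨c', h1, h2⟩; cases h1; exact h2
  | cons x u ih =>
    intro c c''
    constructor
    · intro h
      cases h with
      | cons hs hr =>
        obtain ⟨c', h1, h2⟩ := (ih _ _).1 hr
        exact ⟨c', .cons hs h1, h2⟩
    · rintro ⟨c', h1, h2⟩
      cases h1 with
      | cons hs hr => exact .cons hs ((ih _ _).2 ⟨c', hr, h2⟩)

theorem run_nil {Sigma : Type} (A : RsA Sigma) (c c') : A.Run c [] c' ↔ c' = c := by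
  constructor
  · intro h; cases h; rfl
  · rintro rfl; exact .nil _

theorem run_single {Sigma : Type} (A : RsA Sigma) (x c c') : A.Run c [x] c' ↔ A.Step c x c' := by
  constructor
  · intro h
    cases h with
    | cons hs hr => cases hr; exact hs
  · intro h; exact .cons h (.nil _)

/-- Register contents of the witness automata after reading `0, …, m-1`. -/
def witF (code : ℕ → Finset ℕ) (m : ℕ) : ℕ → Finset ℕ :=
  fun r => (Finset.range m).filter fun d => r ∈ code d

theorem witA_step {Sigma : Type} (a : Sigma) (n N : ℕ) (code : ℕ → Finset ℕ)
    (hc : ∀ k, code k ⊆ Finset.range n) (k : ℕ) (hk : k < 2 * N) (f : ℕ → Finset ℕ) (d : ℕ) (c') :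
    (witA a n N code hc).Step (k, f) (a, d) c' ↔
      (∀ r ∈ (witTr a n N code k).gIn, d ∈ f r) ∧ (∀ r ∈ (witTr a n N code k).gNin, d ∉ f r) ∧
        c' = (k + 1, (witTr a n N code k).apply f d) := by
  have ht : (witTr a n N code k).tgt = k + 1 := by unfold witTr; split_ifs <;> rfl
  have hl : (witTr a n N code k).letter = a := by unfold witTr; split_ifs <;> rfl
  constructor
  · rintro ⟨t, ⟨l, _, rfl⟩, h1, _, h3, h4, h5⟩
    rw [witTr_src] at h1
    simp only at h1
    subst h1
    exact ⟨h3, h4, by rw [h5, ht]⟩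
  · rintro ⟨h3, h4, h5⟩
    exact ⟨_, ⟨k, hk, rfl⟩, witTr_src .., hl, h3, h4, by rw [h5, ht]⟩

theorem witA_phase1 {Sigma : Type} (a : Sigma) (n N : ℕ) (code : ℕ → Finset ℕ)
    (hc : ∀ k, code k ⊆ Finset.range n) (m : ℕ) (hm : m ≤ N) (c) :
    (witA a n N code hc).Run (0, fun _ => ∅) ((List.range m).map fun i => (a, i)) c ↔
      c = (m, witF code m) := by
  induction m generalizing c with
  | zero =>
    have h : witF code 0 = fun _ => ∅ := by funext r; simp [witF]
    simp [run_nil, h]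
  | succ m ih =>
    rw [List.range_succ, List.map_append, run_append]
    simp only [ih (by omega), exists_eq_left, List.map_cons, List.map_nil, run_single]
    rw [witA_step a n N code hc m (by omega)]
    have h : (witTr a n N code m).apply (witF code m) m = witF code (m + 1) := by
      funext r
      ext x
      unfold witTr RsATrans.apply witF
      rw [if_pos (by omega), Finset.range_add_one, Finset.filter_insert]
      dsimp only
      split_ifs <;> simp
    have h1 : (witTr a n N code m).gIn = ∅ := by
      unfold witTr; rw [if_pos (by omega)]
    have h2 : (witTr a n N code m).gNin = ∅ := by
      unfold witTr; rw [if_pos (by omega)]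
    rw [h, h1, h2]
    simp

theorem witA_phase2 {Sigma : Type} (a : Sigma) (n N : ℕ) (code : ℕ → Finset ℕ)
    (hc : ∀ k, code k ⊆ Finset.range n) (f : ℕ → Finset ℕ) (g : ℕ → ℕ) (m : ℕ) (hm : m ≤ N) (c) :
    (witA a n N code hc).Run (N, f) ((List.range m).map fun i => (a, g i)) c ↔
      c = (N + m, f) ∧ ∀ i < m, (∀ r ∈ code i, g i ∈ f r) ∧
        ∀ r ∈ Finset.range n \ code i, g i ∉ f r := by
  induction m generalizing c with
  | zero => simp [run_nil]
  | succ m ih =>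
    rw [List.range_succ, List.map_append, run_append]
    simp only [ih (by omega), List.map_cons, List.map_nil, run_single, and_assoc, exists_eq_left]
    have e : witTr a n N code (N + m) = ⟨N + m, a, code m, Finset.range n \ code m,
        fun r => {some r}, N + m + 1⟩ := by
      unfold witTr; rw [if_neg (by omega)]; simp
    have h : (witTr a n N code (N + m)).apply f (g m) = f := by
      rw [e]
      funext r
      simp [RsATrans.apply]
    have hex : (∃ c', c' = (N + m, f) ∧ (∀ i < m, (∀ r ∈ code i, g i ∈ f r) ∧
        ∀ r ∈ Finset.range n \ code i, g i ∉ f r) ∧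
        (witA a n N code hc).Step c' (a, g m) c) ↔ ((∀ i < m, (∀ r ∈ code i, g i ∈ f r) ∧
        ∀ r ∈ Finset.range n \ code i, g i ∉ f r) ∧
        (witA a n N code hc).Step (N + m, f) (a, g m) c) := exists_eq_left
    rw [witA_step a n N code hc (N + m) (by omega), h, e]
    rw [Nat.forall_lt_succ_right]
    tauto

/-- The test words. -/
def witW {Sigma : Type} (a : Sigma) (N : ℕ) (g : ℕ → ℕ) : DataWord Sigma :=
  ((List.range N).map fun i => (a, i)) ++ ((List.range N).map fun i => (a, g i))

theorem witA_lang {Sigma : Type} (a : Sigma) (n N : ℕ) (code : ℕ → Finset ℕ)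
    (hc : ∀ k, code k ⊆ Finset.range n) (g : ℕ → ℕ) :
    witW a N g ∈ (witA a n N code hc).Lang ↔
      ∀ i < N, (∀ r ∈ code i, g i ∈ witF code N r) ∧
        ∀ r ∈ Finset.range n \ code i, g i ∉ witF code N r := by
  unfold witW
  constructor
  · rintro ⟨q, hq, c, hr, -⟩
    have hq0 : q = 0 := by simpa [witA] using hq
    subst hq0
    rw [run_append] at hr
    obtain ⟨c', h1, h2⟩ := hr
    rw [witA_phase1 a n N code hc N le_rfl] at h1
    subst h1
    exact ((witA_phase2 a n N code hc _ g N le_rfl _).1 h2).2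
  · intro h
    refine ⟨0, by simp [witA], (N + N, witF code N), ?_, ?_⟩
    · rw [run_append]
      exact ⟨_, (witA_phase1 a n N code hc N le_rfl _).2 rfl,
        (witA_phase2 a n N code hc _ g N le_rfl _).2 ⟨rfl, h⟩⟩
    · simp [witA]; omega

/-- Two configurations related by a permutation of the data. -/
def ConfRel {Sigma : Type} (A : RsA Sigma) (σ : Equiv.Perm ℕ) (c c' : ℕ × (ℕ → Finset ℕ)) : Prop :=
  c'.1 = c.1 ∧ ∀ r ∈ A.R, ∀ d, σ d ∈ c'.2 r ↔ d ∈ c.2 r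

theorem step_equiv {Sigma : Type} (A : RsA Sigma) (σ : Equiv.Perm ℕ) {c d c' x}
    (h : A.Step c x d) (hr : ConfRel A σ c c') :
    ∃ d', A.Step c' (x.1, σ x.2) d' ∧ ConfRel A σ d d' := by
  obtain ⟨t, ht, h1, h2, h3, h4, rfl⟩ := h
  obtain ⟨-, -, hI, hN, -, hu⟩ := A.wf t ht
  refine ⟨_, ⟨t, ht, by rw [h1, hr.1], h2, ?_, ?_, rfl⟩, rfl, ?_⟩
  · intro r hr'
    exact (hr.2 r (hI hr') _).2 (h3 r hr')
  · intro r hr' hh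
    exact h4 r hr' ((hr.2 r (hN hr') _).1 hh)
  · intro r hR e
    simp only [RsATrans.apply, Finset.mem_biUnion]
    refine exists_congr fun o => and_congr_right fun ho => ?_
    cases o with
    | none => simp
    | some r' => exact hr.2 r' (hu r hR r' ho) e

theorem run_equiv {Sigma : Type} (A : RsA Sigma) (σ : Equiv.Perm ℕ) {c d w}
    (h : A.Run c w d) : ∀ c', ConfRel A σ c c' →
    ∃ d', A.Run c' (w.map fun x => (x.1, σ x.2)) d' ∧ ConfRel A σ d d' := by
  induction h with
  | nil c => intro c' h; exact ⟨c', .nil _, h⟩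
  | cons hs _ ih =>
    intro c' h
    obtain ⟨d1, h1, h2⟩ := step_equiv A σ hs h
    obtain ⟨d2, h3, h4⟩ := ih d1 h2
    exact ⟨d2, .cons h1 h3, h4⟩

/-- Any RsA with at most `n` registers accepting `uu` for `u = 0 … 2^n-1` also accepts `u σ(u)` for
a transposition `σ` that does not fix `u`. -/
theorem rsa_confuse {Sigma : Type} (a : Sigma) (n : ℕ) (A : RsA Sigma) (hA : A.R.card ≤ n)
    (h : witW a (2 ^ n) id ∈ A.Lang) :
    ∃ g : ℕ → ℕ, (∃ i < 2 ^ n, g i ≠ i) ∧ witW a (2 ^ n) g ∈ A.Lang := by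
  obtain ⟨q, hq, c, hr, hF⟩ := h
  unfold witW at hr
  rw [run_append] at hr
  obtain ⟨c', h1, h2⟩ := hr
  have key : ∃ i j, i < 2 ^ n ∧ i ≠ j ∧ ∀ r ∈ A.R, i ∈ c'.2 r ↔ j ∈ c'.2 r := by
    have hcard : A.R.powerset.card < (Finset.range (2 ^ n + 1)).card := by
      rw [Finset.card_powerset, Finset.card_range]
      exact Nat.lt_succ_of_le (Nat.pow_le_pow_right (by norm_num) hA)
    obtain ⟨i, hi, j, hj, hij, he⟩ := Finset.exists_ne_map_eq_of_card_lt_of_maps_to hcard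
      (f := fun d => A.R.filter fun r => d ∈ c'.2 r)
      (fun d _ => Finset.mem_powerset.2 (Finset.filter_subset _ _))
    have he' : ∀ r ∈ A.R, i ∈ c'.2 r ↔ j ∈ c'.2 r := by
      intro r hr
      have := Finset.ext_iff.1 he r
      simpa [hr] using this
    rw [Finset.mem_range] at hi hj
    rcases Nat.lt_or_gt_of_ne hij with hlt | hlt
    · exact ⟨i, j, by omega, hij, he'⟩
    · exact ⟨j, i, by omega, hij.symm, fun r hr => (he' r hr).symm⟩
  obtain ⟨i, j, hi, hij, he⟩ := key
  have hrel : ConfRel A (Equiv.swap i j) c' c' := by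
    refine ⟨rfl, fun r hr d => ?_⟩
    by_cases hdi : d = i
    · subst hdi; rw [Equiv.swap_apply_left]; exact (he r hr).symm
    by_cases hdj : d = j
    · subst hdj; rw [Equiv.swap_apply_right]; exact he r hr
    rw [Equiv.swap_apply_of_ne_of_ne hdi hdj]
  obtain ⟨d', h3, h4⟩ := run_equiv A _ h2 c' hrel
  refine ⟨Equiv.swap i j, ⟨i, hi, by rw [Equiv.swap_apply_left]; exact hij.symm⟩, q, hq, d', ?_, ?_⟩
  · unfold witW
    rw [run_append]
    refine ⟨c', h1, ?_⟩
    simpa [List.map_map, Function.comp_def] using h3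
  · rw [h4.1]; exact hF

/-- For each `n ≥ 1`, the class of languages of DRsAs with at most
`n` registers is not closed under intersection. -/
theorem drsa_n_not_closed_under_intersection (Sigma : Type) [Fintype Sigma]
    [Nonempty Sigma] (n : ℕ) (hn : 1 ≤ n) :
    ∃ L₁ L₂ : Set (DataWord Sigma),
      (∃ A₁ : RsA Sigma, A₁.Deterministic ∧ A₁.R.card ≤ n ∧ RsA.Lang A₁ = L₁) ∧
      (∃ A₂ : RsA Sigma, A₂.Deterministic ∧ A₂.R.card ≤ n ∧ RsA.Lang A₂ = L₂) ∧
      ¬ ∃ A : RsA Sigma, A.Deterministic ∧ A.R.card ≤ n ∧ RsA.Lang A = L₁ ∩ L₂ := by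
  classical
  obtain ⟨a⟩ := ‹Nonempty Sigma›
  let code1 : ℕ → Finset ℕ := fun k => (Finset.range n).filter fun r => k.testBit r = true
  let code2 : ℕ → Finset ℕ := fun k => if k = 0 then {0} else ∅
  have hc1 : ∀ k, code1 k ⊆ Finset.range n := fun k => Finset.filter_subset _ _
  have hc2 : ∀ k, code2 k ⊆ Finset.range n := by
    intro k
    by_cases hk : k = 0
    · simp [code2, hk]; omega
    · simp [code2, hk]
  refine ⟨_, _, ⟨witA a n (2 ^ n) code1 hc1, witA_det _ _ _ _ _, by simp [witA], rfl⟩,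
    ⟨witA a n (2 ^ n) code2 hc2, witA_det _ _ _ _ _, by simp [witA], rfl⟩, ?_⟩
  rintro ⟨A, -, hA, hL⟩
  have hid : witW a (2 ^ n) id ∈ A.Lang := by
    rw [hL]
    constructor
    · rw [witA_lang]
      intro i hi
      constructor
      · intro r hr
        exact Finset.mem_filter.2 ⟨Finset.mem_range.2 hi, hr⟩
      · intro r hr hh
        exact (Finset.mem_sdiff.1 hr).2 (Finset.mem_filter.1 hh).2
    · rw [witA_lang]
      intro i hi
      constructor
      · intro r hr
        exact Finset.mem_filter.2 ⟨Finset.mem_range.2 hi, hr⟩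
      · intro r hr hh
        exact (Finset.mem_sdiff.1 hr).2 (Finset.mem_filter.1 hh).2
  obtain ⟨g, ⟨i, hi, hgi⟩, hg⟩ := rsa_confuse a n A hA hid
  rw [hL] at hg
  obtain ⟨hg1, hg2⟩ := hg
  rw [witA_lang] at hg1 hg2
  apply hgi
  by_cases h0 : i = 0
  · subst h0
    have := (hg2 0 hi).1 0 (by simp [code2])
    have h := (Finset.mem_filter.1 this).2
    by_contra hne
    simp [code2, hne] at h
  · obtain ⟨hp, hq⟩ := hg1 i hi
    have big : ∀ x < 2 ^ n, ∀ r, n ≤ r → x.testBit r = false := fun x hx r hr =>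
      Nat.testBit_lt_two_pow (lt_of_lt_of_le hx (Nat.pow_le_pow_right (by norm_num) hr))
    obtain ⟨r0, hr0⟩ := Nat.exists_testBit_of_ne_zero h0
    have hr0n : r0 < n := by
      by_contra hcon
      rw [big i hi r0 (by omega)] at hr0
      exact absurd hr0 (by simp)
    have hlt : g i < 2 ^ n := by
      have := hp r0 (by simp [code1, hr0n, hr0])
      exact Finset.mem_range.1 (Finset.mem_filter.1 this).1
    apply Nat.eq_of_testBit_eq
    intro r
    by_cases hr : r < n
    · cases hb : i.testBit r with
      | true =>
        have := hp r (by simp [code1, hr, hb])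
        have := (Finset.mem_filter.1 this).2
        exact (Finset.mem_filter.1 this).2
      | false =>
        have := hq r (by simp [code1, hr, hb])
        by_contra hcon
        apply this
        have hcon' := Bool.eq_true_of_not_eq_false hcon
        simp [witF, code1, hlt, hr, hcon']
    · rw [big i hi r (by omega), big _ hlt r (by omega)]
end

section
/- For every nondeterministic register automaton with at most one register and no disequality guards (every transition has g≠ = ∅), there exists a deterministic register set automaton recognizing the same language. -/
namespace NRAtoDRsA

open Classical in
/-- The transition `t` is enabled in macrostate `P` when the current value is stored exactly
for the states in `G`. -/
def En {Sigma : Type} (A : NRA Sigma) (P : Finset ℕ) (a : Sigma) (G : Finset ℕ)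
    (t : NRATrans Sigma) : Prop :=
  t ∈ A.Δ ∧ t.letter = a ∧ t.src ∈ P ∧ (t.gEq.Nonempty → t.src ∈ G)

open Classical in
noncomputable def nextP {Sigma : Type} (A : NRA Sigma) (P : Finset ℕ) (a : Sigma)
    (G : Finset ℕ) : Finset ℕ :=
  A.Q.filter fun s => ∃ t, En A P a G t ∧ t.tgt = s

open Classical in
noncomputable def nextU {Sigma : Type} (A : NRA Sigma) (P : Finset ℕ) (a : Sigma)
    (G : Finset ℕ) (s : ℕ) : Finset (Option ℕ) :=
  (insert none (A.Q.image some)).filter fun o =>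
    ∃ t, En A P a G t ∧ t.tgt = s ∧ ∃ r ∈ A.R,
      (o = none ∧ (t.upd r = NRAUpd.input ∨ (t.gEq.Nonempty ∧ t.upd r = NRAUpd.reg r))) ∨
      (o = some t.src ∧ t.gEq = ∅ ∧ t.upd r = NRAUpd.reg r)

noncomputable def trans {Sigma : Type} (A : NRA Sigma) (P : Finset ℕ) (a : Sigma)
    (G : Finset ℕ) : RsATrans Sigma where
  src := Encodable.encode P
  letter := a
  gIn := G
  gNin := A.Q \ G
  upd := nextU A P a G
  tgt := Encodable.encode (nextP A P a G)

def detTrans {Sigma : Type} (A : NRA Sigma) : Set (RsATrans Sigma) :=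
  {t | ∃ P a G, P ⊆ A.Q ∧ G ⊆ A.Q ∧ t = trans A P a G}

theorem detTrans_finite {Sigma : Type} [Fintype Sigma] (A : NRA Sigma) :
    (detTrans A).Finite := by
  classical
  refine ((A.Q.powerset ×ˢ ((Finset.univ : Finset Sigma) ×ˢ A.Q.powerset)).finite_toSet.image
    (fun p : Finset ℕ × Sigma × Finset ℕ => trans A p.1 p.2.1 p.2.2)).subset ?_
  rintro _ ⟨P, a, G, hP, hG, rfl⟩
  exact ⟨⟨P, a, G⟩, by simp [hP, hG], rfl⟩

open Classical in
noncomputable def det {Sigma : Type} [Fintype Sigma] (A : NRA Sigma) : RsA Sigma where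
  Q := A.Q.powerset.image Encodable.encode
  R := A.Q
  Δ := detTrans A
  I := {Encodable.encode A.I}
  F := (A.Q.powerset.filter fun P => ∃ q ∈ P, q ∈ A.F).image Encodable.encode
  finite_trans := detTrans_finite A
  I_sub := by
    intro x hx
    rw [Finset.mem_singleton] at hx
    subst hx
    exact Finset.mem_image_of_mem _ (Finset.mem_powerset.2 A.I_sub)
  F_sub := Finset.image_subset_image (Finset.filter_subset _ _)
  wf := by
    rintro _ ⟨P, a, G, h2, h3, rfl⟩
    refine ⟨Finset.mem_image_of_mem _ (Finset.mem_powerset.2 h2),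
      Finset.mem_image_of_mem _ (Finset.mem_powerset.2 (Finset.filter_subset _ _)),
      h3, Finset.sdiff_subset, Finset.disjoint_sdiff, ?_⟩
    intro r _ r' hr'
    have := (Finset.mem_filter.1 hr').1
    simpa using this

theorem mem_det {Sigma : Type} [Fintype Sigma] (A : NRA Sigma) (t : RsATrans Sigma) :
    t ∈ (det A).Δ ↔ ∃ P a G, P ⊆ A.Q ∧ G ⊆ A.Q ∧ t = trans A P a G :=
  Iff.rfl

theorem det_deterministic {Sigma : Type} [Fintype Sigma] (A : NRA Sigma) :
    (det A).Deterministic := by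
  intro t₁ h₁ t₂ h₂ hne hs hl
  rw [mem_det] at h₁ h₂
  obtain ⟨P, a, G, hP, hG, rfl⟩ := h₁
  obtain ⟨P', a', G', hP', hG', rfl⟩ := h₂
  have e1 : P = P' := Encodable.encode_injective hs
  have e2 : a = a' := hl
  subst e1 e2
  by_contra hcon
  apply hne
  have : G = G' := by
    simp only [trans, not_or, Finset.not_nonempty_iff_eq_empty, Finset.eq_empty_iff_forall_notMem,
      Finset.mem_inter, Finset.mem_sdiff, not_and, not_not] at hcon
    ext q
    exact ⟨fun h => hcon.1 q h (hG h), fun h => hcon.2 q h (hG' h)⟩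
  rw [this]

/-- The macro configuration `k` represents the set `C` of configurations. -/
def Inv {Sigma : Type} (A : NRA Sigma) (C : Set (ℕ × (ℕ → Option ℕ)))
    (k : ℕ × (ℕ → Finset ℕ)) : Prop :=
  ∃ P : Finset ℕ, P ⊆ A.Q ∧ k.1 = Encodable.encode P ∧
    (∀ q, q ∈ P ↔ ∃ f, (q, f) ∈ C) ∧
    ∀ q ∈ A.Q, ∀ v, v ∈ k.2 q ↔ ∃ f, (q, f) ∈ C ∧ ∃ r ∈ A.R, f r = some v

def Post {Sigma : Type} (A : NRA Sigma) (C : Set (ℕ × (ℕ → Option ℕ))) (x : Sigma × ℕ) :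
    Set (ℕ × (ℕ → Option ℕ)) := {c' | ∃ c ∈ C, A.Step c x c'}

open Classical in
theorem inv_apply {Sigma : Type} [Fintype Sigma] (A : NRA Sigma) (hreg : A.R.card ≤ 1)
    (hneq : ∀ t ∈ A.Δ, t.gNeq = ∅) (C : Set (ℕ × (ℕ → Option ℕ))) (P : Finset ℕ)
    (g : ℕ → Finset ℕ) (hPQ : P ⊆ A.Q) (hP : ∀ q, q ∈ P ↔ ∃ f, (q, f) ∈ C)
    (hg : ∀ q ∈ A.Q, ∀ v, v ∈ g q ↔ ∃ f, (q, f) ∈ C ∧ ∃ r ∈ A.R, f r = some v)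
    (a : Sigma) (d : ℕ) (G : Finset ℕ) (hG : ∀ q, q ∈ G ↔ q ∈ A.Q ∧ d ∈ g q) :
    Inv A (Post A C (a, d)) (Encodable.encode (nextP A P a G), (trans A P a G).apply g d) := by
  have huniq : ∀ r ∈ A.R, ∀ r' ∈ A.R, r = r' := Finset.card_le_one.1 hreg
  have hen : ∀ t ∈ A.Δ, ∀ f, (t.src, f) ∈ C → t.letter = a → (∀ r ∈ t.gEq, f r = some d) →
      En A P a G t := by
    intro t ht f hf hl hgd
    refine ⟨ht, hl, (hP _).2 ⟨f, hf⟩, ?_⟩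
    rintro ⟨r, hr⟩
    exact (hG _).2 ⟨(A.wf t ht).1, (hg _ (A.wf t ht).1 d).2
      ⟨f, hf, r, (A.wf t ht).2.2.1 hr, hgd r hr⟩⟩
  have hstep : ∀ t ∈ A.Δ, ∀ f, (t.src, f) ∈ C → t.letter = a → (∀ r ∈ t.gEq, f r = some d) →
      (t.tgt, t.apply f d) ∈ Post A C (a, d) := by
    intro t ht f hf hl hgd
    refine ⟨_, hf, t, ht, rfl, hl, hgd, ?_, rfl⟩
    rw [hneq t ht]
    simp
  -- a configuration realizing an enabled transition
  have hreal : ∀ t, En A P a G t → ∃ f, (t.src, f) ∈ C ∧ (∀ r ∈ t.gEq, f r = some d) ∧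
      (t.gEq.Nonempty → ∀ r ∈ A.R, f r = some d) := by
    rintro t ⟨ht, hl, hs, hgG⟩
    by_cases hne : t.gEq.Nonempty
    · obtain ⟨f, hf, r, hr, hv⟩ := (hg _ (A.wf t ht).1 d).1 ((hG _).1 (hgG hne)).2
      have : ∀ r ∈ A.R, f r = some d := fun r' hr' => by rw [huniq r' hr' r hr, hv]
      exact ⟨f, hf, fun r' hr' => this r' ((A.wf t ht).2.2.1 hr'), fun _ => this⟩
    · obtain ⟨f, hf⟩ := (hP _).1 hs
      refine ⟨f, hf, fun r hr => absurd ⟨r, hr⟩ hne, fun h => absurd h hne⟩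
  refine ⟨nextP A P a G, Finset.filter_subset _ _, rfl, ?_, ?_⟩
  · intro s
    simp only [nextP, Finset.mem_filter]
    constructor
    · rintro ⟨_, t, ht, rfl⟩
      obtain ⟨f, hf, hgd, _⟩ := hreal t ht
      exact ⟨_, hstep t ht.1 f hf ht.2.1 hgd⟩
    · rintro ⟨f', ⟨q, f⟩, hf, t, ht, hsrc, hl, hgd, _, he⟩
      simp only [Prod.mk.injEq] at hsrc he
      subst hsrc
      rw [he.1]
      exact ⟨(A.wf t ht).2.1, t, hen t ht f hf hl hgd, rfl⟩
  · intro s hs v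
    simp only [RsATrans.apply, Finset.mem_biUnion]
    constructor
    · rintro ⟨o, ho, hv⟩
      obtain ⟨_, t, ht, rfl, r, hr, ⟨rfl, hu⟩ | ⟨rfl, he, hu⟩⟩ := Finset.mem_filter.1 ho
      · have hvd : v = d := by simpa using hv
        subst hvd
        obtain ⟨f, hf, hgd, hall⟩ := hreal t ht
        refine ⟨_, hstep t ht.1 f hf ht.2.1 hgd, r, hr, ?_⟩
        rcases hu with hu | ⟨hne, hu⟩
        · simp [NRATrans.apply, hu]
        · simp [NRATrans.apply, hu, hall hne r hr]
      · obtain ⟨f, hf, r', hr', hv'⟩ := (hg _ (A.wf t ht.1).1 v).1 hv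
        rw [huniq r' hr' r hr] at hv'
        refine ⟨_, hstep t ht.1 f hf ht.2.1 (by simp [he]), r, hr, ?_⟩
        simp [NRATrans.apply, hu, hv']
    · rintro ⟨f', ⟨⟨q, f⟩, hf, t, ht, hsrc, hl, hgd, _, he⟩, r, hr, hv⟩
      simp only [Prod.mk.injEq] at hsrc he hgd hl
      obtain ⟨rfl, rfl⟩ := he
      subst hsrc
      have hE := hen t ht f hf hl hgd
      have hQ := (A.wf t ht).1
      cases hu : t.upd r with
      | reg r' =>
        have hr' := (A.wf t ht).2.2.2.2.2 r hr r' hu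
        have := huniq r' hr' r hr
        subst this
        simp only [NRATrans.apply, hu] at hv
        by_cases hne : t.gEq.Nonempty
        · obtain ⟨r₂, hr₂⟩ := hne
          have h2 := hgd r₂ hr₂
          rw [huniq r₂ ((A.wf t ht).2.2.1 hr₂) r' hr, hv] at h2
          refine ⟨none, Finset.mem_filter.2 ⟨by simp, t, hE, rfl, r', hr,
            Or.inl ⟨rfl, Or.inr ⟨⟨r₂, hr₂⟩, hu⟩⟩⟩, ?_⟩
          simpa using h2
        · refine ⟨some t.src, Finset.mem_filter.2 ⟨by simp [hQ], t, hE, rfl, r', hr,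
            Or.inr ⟨rfl, Finset.not_nonempty_iff_eq_empty.1 hne, hu⟩⟩, ?_⟩
          exact (hg _ hQ v).2 ⟨f, hf, r', hr, hv⟩
      | input =>
        simp only [NRATrans.apply, hu, Option.some.injEq] at hv
        refine ⟨none, Finset.mem_filter.2 ⟨by simp, t, hE, rfl, r, hr,
            Or.inl ⟨rfl, Or.inl hu⟩⟩, ?_⟩
        simp [hv]
      | clear => simp [NRATrans.apply, hu] at hv

theorem inv_step {Sigma : Type} [Fintype Sigma] (A : NRA Sigma) (hreg : A.R.card ≤ 1)
    (hneq : ∀ t ∈ A.Δ, t.gNeq = ∅) (C : Set (ℕ × (ℕ → Option ℕ)))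
    (k k' : ℕ × (ℕ → Finset ℕ)) (x : Sigma × ℕ) (h : Inv A C k) (hs : (det A).Step k x k') :
    Inv A (Post A C x) k' := by
  obtain ⟨P, hPQ, hk, hP, hg⟩ := h
  obtain ⟨t, ht, hsrc, hl, hin, hnin, rfl⟩ := hs
  obtain ⟨P', a, G, hP', hG, rfl⟩ := (mem_det A t).1 ht
  have e1 : P' = P := Encodable.encode_injective (hsrc.trans hk)
  have e2 : a = x.1 := hl
  subst e1 e2
  refine inv_apply A hreg hneq C P' k.2 hPQ hP hg x.1 x.2 G ?_
  intro q
  refine ⟨fun hq => ⟨hG hq, hin q hq⟩, fun hq => ?_⟩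
  by_contra hc
  exact hnin q (Finset.mem_sdiff.2 ⟨hq.1, hc⟩) hq.2

theorem exists_step {Sigma : Type} [Fintype Sigma] (A : NRA Sigma)
    (C : Set (ℕ × (ℕ → Option ℕ)))
    (k : ℕ × (ℕ → Finset ℕ)) (x : Sigma × ℕ) (h : Inv A C k) :
    ∃ k', (det A).Step k x k' := by
  obtain ⟨P, hPQ, hk, hP, hg⟩ := h
  refine ⟨_, trans A P x.1 (A.Q.filter fun q => x.2 ∈ k.2 q),
    (mem_det A _).2 ⟨P, x.1, _, hPQ, Finset.filter_subset _ _, rfl⟩, hk.symm, rfl, ?_, ?_, rfl⟩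
  · intro r hr
    exact (Finset.mem_filter.1 hr).2
  · intro r hr hx
    obtain ⟨h1, h2⟩ := Finset.mem_sdiff.1 hr
    exact h2 (Finset.mem_filter.2 ⟨h1, hx⟩)

open Classical in
theorem inv_run {Sigma : Type} [Fintype Sigma] (A : NRA Sigma) (hreg : A.R.card ≤ 1)
    (hneq : ∀ t ∈ A.Δ, t.gNeq = ∅) (w : DataWord Sigma) :
    ∀ (C : Set (ℕ × (ℕ → Option ℕ))) (k : ℕ × (ℕ → Finset ℕ)), Inv A C k →
    ((∃ k', (det A).Run k w k' ∧ k'.1 ∈ (det A).F) ↔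
      ∃ c ∈ C, ∃ c', A.Run c w c' ∧ c'.1 ∈ A.F) := by
  induction w with
  | nil =>
    rintro C k ⟨P, hPQ, hk, hP, hg⟩
    constructor
    · rintro ⟨k', hr, hf⟩
      cases hr
      obtain ⟨P', hP', he⟩ := Finset.mem_image.1 hf
      have e : P' = P := Encodable.encode_injective (he.trans hk)
      subst e
      obtain ⟨_, q, hq, hqF⟩ := Finset.mem_filter.1 hP'
      obtain ⟨f, hf⟩ := (hP q).1 hq
      exact ⟨_, hf, _, NRA.Run.nil _, hqF⟩
    · rintro ⟨⟨q, f⟩, hc, c', hr, hf⟩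
      cases hr
      refine ⟨k, RsA.Run.nil _, Finset.mem_image.2 ⟨P, Finset.mem_filter.2
        ⟨Finset.mem_powerset.2 hPQ, q, (hP q).2 ⟨f, hc⟩, hf⟩, hk.symm⟩⟩
  | cons x w ih =>
    intro C k hk
    constructor
    · rintro ⟨k', hr, hf⟩
      cases hr with
      | cons hs hr =>
        obtain ⟨c, ⟨c₀, hc₀, hs₀⟩, c', hr', hf'⟩ :=
          (ih _ _ (inv_step A hreg hneq C k _ x hk hs)).1 ⟨k', hr, hf⟩
        exact ⟨c₀, hc₀, c', NRA.Run.cons hs₀ hr', hf'⟩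
    · rintro ⟨c, hc, c', hr, hf⟩
      cases hr with
      | cons hs hr =>
        obtain ⟨k₁, hk₁⟩ := exists_step A C k x hk
        obtain ⟨k', hr', hf'⟩ := (ih _ _ (inv_step A hreg hneq C k _ x hk hk₁)).2
          ⟨_, ⟨c, hc, hs⟩, c', hr, hf⟩
        exact ⟨k', RsA.Run.cons hk₁ hr', hf'⟩

theorem inv_init {Sigma : Type} (A : NRA Sigma) :
    Inv A {c | c.1 ∈ A.I ∧ c.2 = fun _ => none} (Encodable.encode A.I, fun _ => ∅) := by
  refine ⟨A.I, A.I_sub, rfl, ?_, ?_⟩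
  · intro q
    simp
  · intro q _ v
    simp

end NRAtoDRsA

/-- Every NRA with at most one register and no disequality guards
can be converted to a deterministic RsA with the same language. -/
theorem nra_eq_one_to_drsa (Sigma : Type) [Fintype Sigma] [Nonempty Sigma]
    (A : NRA Sigma) (hreg : A.R.card ≤ 1) (hneq : ∀ t ∈ A.Δ, t.gNeq = ∅) :
    ∃ D : RsA Sigma, D.Deterministic ∧ RsA.Lang D = NRA.Lang A := by
  refine ⟨NRAtoDRsA.det A, NRAtoDRsA.det_deterministic A, ?_⟩
  ext w
  have h := NRAtoDRsA.inv_run A hreg hneq w _ _ (NRAtoDRsA.inv_init A)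
  constructor
  · rintro ⟨q₀, hq₀, k', hr, hf⟩
    have e : q₀ = Encodable.encode A.I := Finset.mem_singleton.1 hq₀
    subst e
    obtain ⟨⟨q, f⟩, ⟨hq, hf₀⟩, c', hr', hf'⟩ := h.1 ⟨k', hr, hf⟩
    simp only at hq hf₀
    subst hf₀
    exact ⟨q, hq, c', hr', hf'⟩
  · rintro ⟨q, hq, c', hr', hf'⟩
    obtain ⟨k', hr, hf⟩ := h.2 ⟨_, ⟨hq, rfl⟩, c', hr', hf'⟩
    exact ⟨_, Finset.mem_singleton_self _, k', hr, hf⟩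
end

section
/- For every universal register automaton with at most one register and no disequality guards (every transition has g≠ = ∅), there exists a deterministic register set automaton recognizing the same language. -/
namespace UraProof

open Classical

variable {Sigma : Type}

/-- New value of the single register. -/
noncomputable def newVal (A : NRA Sigma) (r0 : ℕ) (t : NRATrans Sigma) (v : Option ℕ) (d : ℕ) :
    Option ℕ :=
  if r0 ∈ A.R then
    match t.upd r0 with
    | NRAUpd.reg _ => v
    | NRAUpd.input => some d
    | NRAUpd.clear => none
  else none

def Keep (A : NRA Sigma) (r0 : ℕ) (t : NRATrans Sigma) : Prop :=
  ∀ v d, newVal A r0 t v d = v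

theorem newVal_cases (A : NRA Sigma) (r0 : ℕ) (t : NRATrans Sigma) :
    Keep A r0 t ∨ (∀ v d, newVal A r0 t v d = some d) ∨ (∀ v d, newVal A r0 t v d = none) := by
  unfold Keep newVal
  by_cases h : r0 ∈ A.R
  · cases h2 : t.upd r0 <;> simp [h]
  · simp [h]

abbrev Cfg := Set (ℕ × Option ℕ)

def Post (A : NRA Sigma) (r0 : ℕ) (C : Cfg) (a : Sigma) (d : ℕ) : Cfg :=
  { c | ∃ t ∈ A.Δ, t.letter = a ∧ t.tgt = c.1 ∧ ∃ v, (t.src, v) ∈ C ∧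
      (t.gEq.Nonempty → v = some d) ∧ c.2 = newVal A r0 t v d }

def OK (A : NRA Sigma) (C : Cfg) (a : Sigma) (d : ℕ) : Prop :=
  ∀ q ∈ A.Q, ∀ v, (q, v) ∈ C → ∃ t ∈ A.Δ, t.src = q ∧ t.letter = a ∧
    (t.gEq.Nonempty → v = some d)

def Fin (A : NRA Sigma) (C : Cfg) : Prop := ∀ q ∈ A.Q, ∀ v, (q, v) ∈ C → q ∈ A.F

structure Rel (A : NRA Sigma) (C₁ C₂ : Cfg) : Prop where
  hB : ∀ q ∈ A.Q, ((q, none) ∈ C₁ ↔ (q, none) ∈ C₂)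
  hN : ∀ q ∈ A.Q, ((∃ e : ℕ, (q, some e) ∈ C₁) ↔ ∃ e : ℕ, (q, some e) ∈ C₂)
  hW : ∀ p ∈ A.Q, ∀ q ∈ A.Q,
    ((∀ x y : ℕ, (p, some x) ∈ C₁ → (q, some y) ∈ C₁ → x = y) ↔
      ∀ x y : ℕ, (p, some x) ∈ C₂ → (q, some y) ∈ C₂ → x = y)

theorem Rel.symm {A : NRA Sigma} {C₁ C₂ : Cfg} (h : Rel A C₁ C₂) : Rel A C₂ C₁ :=
  ⟨fun q hq => (h.hB q hq).symm, fun q hq => (h.hN q hq).symm,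
    fun p hp q hq => (h.hW p hp q hq).symm⟩

def G (A : NRA Sigma) (C₁ C₂ : Cfg) (d₁ d₂ : ℕ) : Prop :=
  ∀ q ∈ A.Q, ((q, some d₁) ∈ C₁ ↔ (q, some d₂) ∈ C₂)

theorem G.symm {A : NRA Sigma} {C₁ C₂ : Cfg} {d₁ d₂ : ℕ} (h : G A C₁ C₂ d₁ d₂) :
    G A C₂ C₁ d₂ d₁ := fun q hq => (h q hq).symm

section transfer
variable {A : NRA Sigma} {r0 : ℕ} {C₁ C₂ : Cfg} {d₁ d₂ : ℕ} {a : Sigma}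

theorem enabled_transfer (h : Rel A C₁ C₂) (g : G A C₁ C₂ d₁ d₂) {t : NRATrans Sigma}
    (ht : t ∈ A.Δ) {v : Option ℕ} (hv : (t.src, v) ∈ C₁) (hg : t.gEq.Nonempty → v = some d₁) :
    ∃ v', (t.src, v') ∈ C₂ ∧ (t.gEq.Nonempty → v' = some d₂) ∧ (v = none ↔ v' = none) ∧
      (v = some d₁ → v' = some d₂) := by
  have hq := (A.wf t ht).1
  by_cases h1 : v = some d₁
  · subst h1
    exact ⟨some d₂, (g _ hq).1 hv, by simp, by simp, by simp⟩
  · have hng : ¬ t.gEq.Nonempty := fun hh => h1 (hg hh)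
    cases v with
    | none => exact ⟨none, (h.hB _ hq).1 hv, by simp [hng], by simp, by simp⟩
    | some e =>
      obtain ⟨e', he'⟩ := (h.hN _ hq).1 ⟨e, hv⟩
      exact ⟨some e', he', by simp [hng], by simp, by simp [h1]⟩

theorem post_transfer (h : Rel A C₁ C₂) (g : G A C₁ C₂ d₁ d₂) {q : ℕ} {v : Option ℕ}
    (hv : (q, v) ∈ Post A r0 C₁ a d₁) :
    ∃ v', (q, v') ∈ Post A r0 C₂ a d₂ ∧ (v = none ↔ v' = none) ∧
      (v = some d₁ → v' = some d₂) := by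
  obtain ⟨t, ht, hl, htg, w, hw, hgd, hnew⟩ := hv
  obtain ⟨w', hw', hgd', e1, e2⟩ := enabled_transfer h g ht hw hgd
  refine ⟨newVal A r0 t w' d₂, ⟨t, ht, hl, htg, w', hw', hgd', rfl⟩, ?_⟩
  simp only at hnew
  subst hnew
  rcases newVal_cases A r0 t with hk | hk | hk
  · rw [hk, hk]; exact ⟨e1, e2⟩
  · simp [hk]
  · simp [hk]

theorem post_none (h : Rel A C₁ C₂) (g : G A C₁ C₂ d₁ d₂) {q : ℕ}
    (hv : (q, none) ∈ Post A r0 C₁ a d₁) : (q, none) ∈ Post A r0 C₂ a d₂ := by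
  obtain ⟨v', h1, h2, -⟩ := post_transfer h g hv
  rwa [h2.1 rfl] at h1

theorem post_in (h : Rel A C₁ C₂) (g : G A C₁ C₂ d₁ d₂) {q : ℕ}
    (hv : (q, some d₁) ∈ Post A r0 C₁ a d₁) : (q, some d₂) ∈ Post A r0 C₂ a d₂ := by
  obtain ⟨v', h1, -, h2⟩ := post_transfer h g hv
  rwa [h2 rfl] at h1

theorem post_some (h : Rel A C₁ C₂) (g : G A C₁ C₂ d₁ d₂) {q : ℕ}
    (hv : ∃ e : ℕ, (q, some e) ∈ Post A r0 C₁ a d₁) :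
    ∃ e : ℕ, (q, some e) ∈ Post A r0 C₂ a d₂ := by
  obtain ⟨e, hv⟩ := hv
  obtain ⟨v', h1, h2, -⟩ := post_transfer h g hv
  cases v' with
  | none => simp at h2
  | some e' => exact ⟨e', h1⟩

/-- `p → q` by an unguarded register preserving transition. -/
def KE (A : NRA Sigma) (r0 : ℕ) (a : Sigma) (p q : ℕ) : Prop :=
  ∃ t ∈ A.Δ, t.src = p ∧ t.letter = a ∧ t.tgt = q ∧ t.gEq = ∅ ∧ Keep A r0 t

theorem KE.mem {p q : ℕ} (h : KE A r0 a p q) : p ∈ A.Q := by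
  obtain ⟨t, ht, rfl, -⟩ := h
  exact (A.wf t ht).1

theorem KE.post {p q : ℕ} (h : KE A r0 a p q) {C : Cfg} {d : ℕ} {v : Option ℕ}
    (hv : (p, v) ∈ C) : (q, v) ∈ Post A r0 C a d := by
  obtain ⟨t, ht, rfl, hl, rfl, hg, hk⟩ := h
  exact ⟨t, ht, hl, rfl, v, hv, by simp [hg], (hk v d).symm⟩

theorem post_shape {C : Cfg} {d x q : ℕ} (h : (q, some x) ∈ Post A r0 C a d) :
    (∃ p, KE A r0 a p q ∧ (p, some x) ∈ C) ∨ x = d := by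
  obtain ⟨t, ht, hl, htg, w, hw, hgd, hnew⟩ := h
  simp only at hnew htg
  rcases newVal_cases A r0 t with hk | hk | hk
  · rw [hk] at hnew
    subst hnew
    by_cases hg : t.gEq.Nonempty
    · right; simpa using hgd hg
    · left
      exact ⟨t.src, ⟨t, ht, rfl, hl, htg, by simpa using hg, hk⟩, hw⟩
  · right; simpa [hk] using hnew
  · simp [hk] at hnew

/-- transfer of `r_q ⊆ {d}`. -/
theorem sub_transfer (h : Rel A C₁ C₂) (g : G A C₁ C₂ d₁ d₂) {q : ℕ} (hq : q ∈ A.Q)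
    (hs : ∀ x : ℕ, (q, some x) ∈ C₁ → x = d₁) (y : ℕ) (hy : (q, some y) ∈ C₂) : y = d₂ := by
  obtain ⟨e, he⟩ := (h.hN q hq).2 ⟨y, hy⟩
  have := hs e he
  subst this
  have hd := (g q hq).1 he
  refine (h.hW q hq q hq).1 (fun x y hx hy => ?_) y d₂ hy hd
  rw [hs x hx, hs y hy]

theorem post_W (h : Rel A C₁ C₂) (g : G A C₁ C₂ d₁ d₂) {p q : ℕ}
    (hW : ∀ x y : ℕ, (p, some x) ∈ Post A r0 C₁ a d₁ → (q, some y) ∈ Post A r0 C₁ a d₁ → x = y)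
    (x y : ℕ) (hx : (p, some x) ∈ Post A r0 C₂ a d₂) (hy : (q, some y) ∈ Post A r0 C₂ a d₂) :
    x = y := by
  rcases post_shape hx with ⟨p0, kp, hp0⟩ | rfl
  · rcases post_shape hy with ⟨q0, kq, hq0⟩ | rfl
    · exact (h.hW p0 kp.mem q0 kq.mem).1
        (fun x y hx hy => hW x y (kp.post hx) (kq.post hy)) x y hp0 hq0
    · have hy1 := post_in h.symm g.symm hy
      exact sub_transfer h g kp.mem (fun x hx => hW x d₁ (kp.post hx) hy1) x hp0
  · rcases post_shape hy with ⟨q0, kq, hq0⟩ | rfl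
    · have hx1 := post_in h.symm g.symm hx
      exact (sub_transfer h g kq.mem (fun y hy => (hW d₁ y hx1 (kq.post hy)).symm) y hq0).symm
    · rfl

theorem post_rel (h : Rel A C₁ C₂) (g : G A C₁ C₂ d₁ d₂) :
    Rel A (Post A r0 C₁ a d₁) (Post A r0 C₂ a d₂) :=
  ⟨fun _ _ => ⟨post_none h g, post_none h.symm g.symm⟩,
   fun _ _ => ⟨post_some h g, post_some h.symm g.symm⟩,
   fun _ _ _ _ => ⟨post_W h g, post_W h.symm g.symm⟩⟩

theorem ok_transfer (h : Rel A C₁ C₂) (g : G A C₁ C₂ d₁ d₂) (ho : OK A C₁ a d₁) :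
    OK A C₂ a d₂ := by
  intro q hq v hv
  cases v with
  | none =>
    obtain ⟨t, ht, hs, hl, hg⟩ := ho q hq none ((h.hB q hq).2 hv)
    exact ⟨t, ht, hs, hl, fun hh => by simpa using hg hh⟩
  | some e =>
    by_cases hu : ∃ t ∈ A.Δ, t.src = q ∧ t.letter = a ∧ ¬ t.gEq.Nonempty
    · obtain ⟨t, ht, hs, hl, hg⟩ := hu
      exact ⟨t, ht, hs, hl, fun hh => absurd hh hg⟩
    · have hall : ∀ x : ℕ, (q, some x) ∈ C₁ → x = d₁ := by
        intro x hx
        obtain ⟨t, ht, hs, hl, hg⟩ := ho q hq _ hx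
        by_cases hh : t.gEq.Nonempty
        · simpa using hg hh
        · exact absurd ⟨t, ht, hs, hl, hh⟩ hu
      have he := sub_transfer h g hq hall e hv
      obtain ⟨e', he'⟩ := (h.hN q hq).2 ⟨e, hv⟩
      obtain ⟨t, ht, hs, hl, hg⟩ := ho q hq _ he'
      exact ⟨t, ht, hs, hl, fun _ => by rw [he]⟩

theorem fin_transfer (h : Rel A C₁ C₂) (hf : Fin A C₁) : Fin A C₂ := by
  intro q hq v hv
  cases v with
  | none => exact hf q hq none ((h.hB q hq).2 hv)
  | some e =>
    obtain ⟨e', he'⟩ := (h.hN q hq).2 ⟨e, hv⟩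
    exact hf q hq _ he'

end transfer

/-- Finite abstraction. -/
noncomputable def alpha (A : NRA Sigma) (C : Cfg) : Finset ℕ × Finset ℕ × Finset (ℕ × ℕ) :=
  (A.Q.filter fun q => (q, none) ∈ C,
   A.Q.filter fun q => ∃ e : ℕ, (q, some e) ∈ C,
   (A.Q ×ˢ A.Q).filter fun pq => ∀ x y : ℕ, (pq.1, some x) ∈ C → (pq.2, some y) ∈ C → x = y)

theorem alpha_rel {A : NRA Sigma} {C₁ C₂ : Cfg} (h : alpha A C₁ = alpha A C₂) : Rel A C₁ C₂ := by
  simp only [alpha, Prod.mk.injEq] at h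
  obtain ⟨h1, h2, h3⟩ := h
  refine ⟨fun q hq => ?_, fun q hq => ?_, fun p hp q hq => ?_⟩
  · simpa [hq] using Finset.ext_iff.1 h1 q
  · simpa [hq] using Finset.ext_iff.1 h2 q
  · simpa only [Finset.mem_filter, Finset.mem_product, hp, hq, and_self, true_and]
      using Finset.ext_iff.1 h3 (p, q)

theorem rel_alpha {A : NRA Sigma} {C₁ C₂ : Cfg} (h : Rel A C₁ C₂) : alpha A C₁ = alpha A C₂ := by
  unfold alpha
  congr 1
  · exact Finset.filter_congr fun q hq => h.hB q hq
  congr 1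
  · exact Finset.filter_congr fun q hq => h.hN q hq
  · refine Finset.filter_congr fun pq hpq => ?_
    rw [Finset.mem_product] at hpq
    exact h.hW pq.1 hpq.1 pq.2 hpq.2

noncomputable def enc (A : NRA Sigma) (C : Cfg) : ℕ := Encodable.encode (alpha A C)

theorem enc_rel {A : NRA Sigma} {C₁ C₂ : Cfg} : enc A C₁ = enc A C₂ ↔ Rel A C₁ C₂ :=
  ⟨fun h => alpha_rel (Encodable.encode_injective h), fun h => by rw [enc, enc, rel_alpha h]⟩

theorem enc_finite (A : NRA Sigma) : (Set.range (enc A)).Finite := by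
  have hf : (Set.range (alpha A)).Finite := by
    refine (Finset.finite_toSet
      (A.Q.powerset ×ˢ (A.Q.powerset ×ˢ (A.Q ×ˢ A.Q).powerset))).subset ?_
    rintro _ ⟨C, rfl⟩
    simp only [alpha, Finset.coe_product, Set.mem_prod, Finset.mem_coe, Finset.mem_powerset]
    exact ⟨Finset.filter_subset _ _, Finset.filter_subset _ _, Finset.filter_subset _ _⟩
  refine (hf.image Encodable.encode).subset ?_
  rintro _ ⟨C, rfl⟩
  exact ⟨_, ⟨C, rfl⟩, rfl⟩

noncomputable def guard (A : NRA Sigma) (C : Cfg) (d : ℕ) : Finset ℕ :=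
  A.Q.filter fun q => (q, some d) ∈ C

theorem guard_G {A : NRA Sigma} {C₁ C₂ : Cfg} {d₁ d₂ : ℕ}
    (h : guard A C₁ d₁ = guard A C₂ d₂) : G A C₁ C₂ d₁ d₂ := by
  intro q hq
  simpa [guard, hq] using Finset.ext_iff.1 h q

noncomputable def trans (A : NRA Sigma) (r0 : ℕ) (C : Cfg) (a : Sigma) (d : ℕ) :
    RsATrans Sigma where
  src := enc A C
  letter := a
  gIn := guard A C d
  gNin := A.Q \ guard A C d
  upd := fun q => (A.Q.filter fun p => KE A r0 a p q).image some ∪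
    (if (q, some d) ∈ Post A r0 C a d then {none} else ∅)
  tgt := enc A (Post A r0 C a d)

theorem trans_eq {A : NRA Sigma} {r0 : ℕ} {C₁ C₂ : Cfg} {a : Sigma} {d₁ d₂ : ℕ}
    (h : enc A C₁ = enc A C₂) (hg : guard A C₁ d₁ = guard A C₂ d₂) :
    trans A r0 C₁ a d₁ = trans A r0 C₂ a d₂ := by
  have hr := enc_rel.1 h
  have g := guard_G hg
  have hp : ∀ q, (q, some d₁) ∈ Post A r0 C₁ a d₁ ↔ (q, some d₂) ∈ Post A r0 C₂ a d₂ :=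
    fun q => ⟨post_in hr g, post_in hr.symm g.symm⟩
  simp only [trans, h, hg, hp, enc_rel.2 (post_rel (r0 := r0) (a := a) hr g)]

def DΔ (A : NRA Sigma) (r0 : ℕ) : Set (RsATrans Sigma) :=
  { t | ∃ C a d, OK A C a d ∧ t = trans A r0 C a d }

theorem trans_inj {A : NRA Sigma} {r0 : ℕ} {t₁ t₂ : RsATrans Sigma} (h₁ : t₁ ∈ DΔ A r0)
    (h₂ : t₂ ∈ DΔ A r0) (hs : t₁.src = t₂.src) (hl : t₁.letter = t₂.letter)
    (hg : t₁.gIn = t₂.gIn) : t₁ = t₂ := by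
  obtain ⟨C₁, a₁, d₁, -, rfl⟩ := h₁
  obtain ⟨C₂, a₂, d₂, -, rfl⟩ := h₂
  simp only [trans] at hs hl hg
  subst hl
  exact trans_eq hs hg

theorem DΔ_finite [Finite Sigma] (A : NRA Sigma) (r0 : ℕ) : (DΔ A r0).Finite := by
  have hf : ((Set.range (enc A)) ×ˢ ((Set.univ : Set Sigma) ×ˢ
      (A.Q.powerset : Set (Finset ℕ)))).Finite :=
    (enc_finite A).prod (Set.finite_univ.prod (Finset.finite_toSet _))
  refine Set.Finite.of_injOn (f := fun t : RsATrans Sigma => (t.src, t.letter, t.gIn)) ?_ ?_ hf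
  · rintro t ⟨C, a, d, -, rfl⟩
    simp [trans, guard]
    exact fun q hq => hq.1
  · intro t₁ h₁ t₂ h₂ h
    simp only [Prod.mk.injEq] at h
    exact trans_inj h₁ h₂ h.1 h.2.1 h.2.2

noncomputable def D [Finite Sigma] (A : NRA Sigma) (r0 : ℕ) : RsA Sigma where
  Q := (enc_finite A).toFinset
  R := A.Q
  Δ := DΔ A r0
  I := {enc A { c | c.1 ∈ A.I ∧ c.2 = none }}
  F := (enc_finite A).toFinset.filter fun s => ∃ C, Fin A C ∧ s = enc A C
  finite_trans := DΔ_finite A r0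
  I_sub := by simp
  F_sub := Finset.filter_subset _ _
  wf := by
    rintro t ⟨C, a, d, -, rfl⟩
    refine ⟨by simp [trans], by simp [trans], Finset.filter_subset _ _, Finset.sdiff_subset,
      Finset.disjoint_sdiff, ?_⟩
    intro r _ r' h
    simp only [trans, Finset.mem_union, Finset.mem_image, Finset.mem_filter] at h
    rcases h with ⟨p, hp, h⟩ | h
    · simp only [Option.some.injEq] at h
      exact h ▸ hp.1
    · split_ifs at h <;> simp at h

theorem D_det [Finite Sigma] (A : NRA Sigma) (r0 : ℕ) : (D A r0).Deterministic := by
  intro t₁ h₁ t₂ h₂ hne hs hl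
  have hg : t₁.gIn ≠ t₂.gIn := fun h => hne (trans_inj h₁ h₂ hs hl h)
  obtain ⟨C₁, a₁, d₁, -, rfl⟩ := h₁
  obtain ⟨C₂, a₂, d₂, -, rfl⟩ := h₂
  by_contra hcon
  rw [not_or, Finset.not_nonempty_iff_eq_empty, Finset.not_nonempty_iff_eq_empty] at hcon
  apply hg
  ext q
  have e1 := Finset.ext_iff.1 hcon.1 q
  have e2 := Finset.ext_iff.1 hcon.2 q
  simp only [trans, guard, Finset.mem_inter, Finset.mem_sdiff, Finset.mem_filter,
    Finset.notMem_empty, iff_false] at e1 e2 ⊢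
  tauto

/-- Acceptance of the abstract semantics. -/
def Acc (A : NRA Sigma) (r0 : ℕ) : Cfg → DataWord Sigma → Prop
  | C, [] => Fin A C
  | C, x :: w => OK A C x.1 x.2 ∧ Acc A r0 (Post A r0 C x.1 x.2) w

theorem apply_spec {A : NRA Sigma} {r0 : ℕ} {C : Cfg} {a : Sigma} {d : ℕ} {f : ℕ → Finset ℕ}
    (hf : ∀ q ∈ A.Q, ∀ e, e ∈ f q ↔ (q, some e) ∈ C) (q e : ℕ) :
    e ∈ (trans A r0 C a d).apply f d q ↔ (q, some e) ∈ Post A r0 C a d := by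
  simp only [RsATrans.apply, trans, Finset.mem_biUnion, Finset.mem_union, Finset.mem_image,
    Finset.mem_filter]
  constructor
  · rintro ⟨o, ⟨p, ⟨hp, hk⟩, rfl⟩ | ho, he⟩
    · exact hk.post ((hf p hp e).1 he)
    · split_ifs at ho with hq
      · simp only [Finset.mem_singleton] at ho
        subst ho
        simp only [Finset.mem_singleton] at he
        exact he ▸ hq
      · simp at ho
  · intro h
    rcases post_shape h with ⟨p, hk, hp⟩ | rfl
    · exact ⟨some p, Or.inl ⟨p, ⟨hk.mem, hk⟩, rfl⟩, (hf p hk.mem e).2 hp⟩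
    · exact ⟨none, Or.inr (by simp [h]), by simp⟩

theorem D_step [Finite Sigma] {A : NRA Sigma} {r0 : ℕ} {C : Cfg} {x : Sigma × ℕ}
    {f : ℕ → Finset ℕ} (hf : ∀ q ∈ A.Q, ∀ e, e ∈ f q ↔ (q, some e) ∈ C)
    (c' : ℕ × (ℕ → Finset ℕ)) :
    (D A r0).Step (enc A C, f) x c' ↔ OK A C x.1 x.2 ∧
      c' = (enc A (Post A r0 C x.1 x.2), (trans A r0 C x.1 x.2).apply f x.2) := by
  constructor
  · rintro ⟨t, ⟨C', a, d, hok, rfl⟩, hs, hl, hi, hn, hc⟩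
    simp only [trans] at hs hl hi hn
    subst hl
    have hg : guard A C' d = guard A C x.2 := by
      ext q
      constructor
      · intro hq
        have hQ := (Finset.mem_filter.1 hq).1
        exact Finset.mem_filter.2 ⟨hQ, (hf q hQ _).1 (hi q hq)⟩
      · intro hq
        by_contra hq'
        obtain ⟨hQ, hm⟩ := Finset.mem_filter.1 hq
        exact hn q (Finset.mem_sdiff.2 ⟨hQ, hq'⟩) ((hf q hQ _).2 hm)
    refine ⟨ok_transfer (enc_rel.1 hs) (guard_G hg) hok, ?_⟩
    rw [trans_eq hs hg] at hc
    exact hc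
  · rintro ⟨hok, rfl⟩
    refine ⟨trans A r0 C x.1 x.2, ⟨C, x.1, x.2, hok, rfl⟩, rfl, rfl, ?_, ?_, rfl⟩
    · intro q hq
      obtain ⟨hQ, hm⟩ := Finset.mem_filter.1 hq
      exact (hf q hQ _).2 hm
    · intro q hq hm
      obtain ⟨hQ, hq'⟩ := Finset.mem_sdiff.1 hq
      exact hq' (Finset.mem_filter.2 ⟨hQ, (hf q hQ _).1 hm⟩)

theorem D_acc [Finite Sigma] {A : NRA Sigma} {r0 : ℕ} (w : DataWord Sigma) :
    ∀ (C : Cfg) (f : ℕ → Finset ℕ), (∀ q ∈ A.Q, ∀ e, e ∈ f q ↔ (q, some e) ∈ C) →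
    ((∃ c, (D A r0).Run (enc A C, f) w c ∧ c.1 ∈ (D A r0).F) ↔ Acc A r0 C w) := by
  induction w with
  | nil =>
    intro C f hf
    constructor
    · rintro ⟨c, hr, hc⟩
      cases hr
      obtain ⟨-, C', hfin, he⟩ := Finset.mem_filter.1 hc
      exact fin_transfer (enc_rel.1 he.symm) hfin
    · intro h
      exact ⟨_, RsA.Run.nil _, Finset.mem_filter.2 ⟨by simp, C, h, rfl⟩⟩
  | cons x w ih =>
    intro C f hf
    have ih' := ih (Post A r0 C x.1 x.2) ((trans A r0 C x.1 x.2).apply f x.2)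
      (fun q _ e => apply_spec hf q e)
    constructor
    · rintro ⟨c, hr, hc⟩
      cases hr with
      | cons hs hr =>
        obtain ⟨hok, rfl⟩ := (D_step hf _).1 hs
        exact ⟨hok, ih'.1 ⟨c, hr, hc⟩⟩
    · rintro ⟨hok, h⟩
      obtain ⟨c, hr, hc⟩ := ih'.2 h
      exact ⟨c, RsA.Run.cons ((D_step hf _).2 ⟨hok, rfl⟩) hr, hc⟩

/-- Universal acceptance from a set of configurations. -/
def U (A : NRA Sigma) (S : Set (ℕ × (ℕ → Option ℕ))) (w : DataWord Sigma) : Prop :=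
  ∀ c₀ ∈ S, ∀ u v : DataWord Sigma, w = u ++ v →
      ∀ c : ℕ × (ℕ → Option ℕ), A.Run c₀ u c →
        (v = [] → c.1 ∈ A.F) ∧
        ∀ x v', v = x :: v' → ∃ c', A.Step c x c'

theorem U_nil (A : NRA Sigma) (S : Set (ℕ × (ℕ → Option ℕ))) :
    U A S [] ↔ ∀ c ∈ S, c.1 ∈ A.F := by
  constructor
  · intro h c hc
    exact (h c hc [] [] rfl c (NRA.Run.nil c)).1 rfl
  · intro h c hc u v huv c' hr
    obtain ⟨rfl, rfl⟩ := List.append_eq_nil_iff.1 huv.symm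
    cases hr
    exact ⟨fun _ => h c hc, by simp⟩

theorem U_cons (A : NRA Sigma) (S : Set (ℕ × (ℕ → Option ℕ))) (x : Sigma × ℕ)
    (w : DataWord Sigma) :
    U A S (x :: w) ↔ (∀ c ∈ S, ∃ c', A.Step c x c') ∧ U A { c' | ∃ c ∈ S, A.Step c x c' } w := by
  constructor
  · intro h
    refine ⟨fun c hc => (h c hc [] (x :: w) rfl c (NRA.Run.nil c)).2 x w rfl, ?_⟩
    rintro c' ⟨c, hc, hs⟩ u v huv c'' hr
    exact h c hc (x :: u) v (by simp [huv]) c'' (NRA.Run.cons hs hr)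
  · rintro ⟨h1, h2⟩ c hc u v huv c' hr
    cases hr with
    | nil =>
      simp only [List.nil_append] at huv
      subst huv
      refine ⟨by simp, ?_⟩
      intro y v' h
      simp only [List.cons.injEq] at h
      obtain ⟨rfl, -⟩ := h
      exact h1 c hc
    | cons hs hr =>
      simp only [List.cons_append, List.cons.injEq] at huv
      obtain ⟨rfl, huv⟩ := huv
      exact h2 _ ⟨c, hc, hs⟩ _ _ huv _ hr

/-- Projection of a configuration to its relevant register. -/
noncomputable def proj (A : NRA Sigma) (r0 : ℕ) (c : ℕ × (ℕ → Option ℕ)) : ℕ × Option ℕ :=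
  (c.1, if r0 ∈ A.R then c.2 r0 else none)

theorem step_iff {A : NRA Sigma} {r0 : ℕ} (hR : A.R ⊆ {r0}) (hneq : ∀ t ∈ A.Δ, t.gNeq = ∅)
    (c : ℕ × (ℕ → Option ℕ)) (x : Sigma × ℕ) (c' : ℕ × (ℕ → Option ℕ)) :
    A.Step c x c' ↔ ∃ t ∈ A.Δ, t.src = c.1 ∧ t.letter = x.1 ∧
      (t.gEq.Nonempty → (proj A r0 c).2 = some x.2) ∧ c' = (t.tgt, t.apply c.2 x.2) := by
  refine exists_congr fun t => and_congr_right fun ht => and_congr_right fun _ =>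
    and_congr_right fun _ => ?_
  have hsub := (A.wf t ht).2.2.1
  rw [hneq t ht, ← and_assoc]
  refine and_congr_left fun _ => ?_
  simp only [Finset.notMem_empty, false_imp_iff, implies_true, and_true]
  constructor
  · rintro h ⟨r, hr⟩
    have hrR := hsub hr
    have := Finset.mem_singleton.1 (hR hrR)
    subst this
    simp only [proj, if_pos hrR]
    exact h r hr
  · intro h r hr
    have hrR := hsub hr
    have := Finset.mem_singleton.1 (hR hrR)
    subst this
    have := h ⟨r, hr⟩
    simpa only [proj, if_pos hrR] using this

theorem proj_apply {A : NRA Sigma} {r0 : ℕ} (hR : A.R ⊆ {r0}) {t : NRATrans Sigma}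
    (ht : t ∈ A.Δ) (c : ℕ × (ℕ → Option ℕ)) (d : ℕ) :
    proj A r0 (t.tgt, t.apply c.2 d) = (t.tgt, newVal A r0 t (proj A r0 c).2 d) := by
  unfold proj newVal NRATrans.apply
  by_cases h : r0 ∈ A.R
  · simp only [h, if_true]
    cases hu : t.upd r0 with
    | reg r' =>
      have := Finset.mem_singleton.1 (hR ((A.wf t ht).2.2.2.2.2 r0 h r' hu))
      simp [this]
    | input => simp
    | clear => simp
  · simp [h]

theorem U_acc {A : NRA Sigma} {r0 : ℕ} (hR : A.R ⊆ {r0}) (hneq : ∀ t ∈ A.Δ, t.gNeq = ∅)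
    (w : DataWord Sigma) : ∀ S : Set (ℕ × (ℕ → Option ℕ)), (∀ c ∈ S, c.1 ∈ A.Q) →
      (U A S w ↔ Acc A r0 (proj A r0 '' S) w) := by
  induction w with
  | nil =>
    intro S hS
    rw [U_nil]
    constructor
    · rintro h q _ v ⟨c, hc, he⟩
      have e1 : c.1 = q := congrArg Prod.fst he
      exact e1 ▸ h c hc
    · intro h c hc
      exact h c.1 (hS c hc) _ ⟨c, hc, rfl⟩
  | cons x w ih =>
    intro S hS
    rw [U_cons, ih, Acc]
    · have hpost : proj A r0 '' { c' | ∃ c ∈ S, A.Step c x c' } =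
          Post A r0 (proj A r0 '' S) x.1 x.2 := by
        ext ⟨q, v⟩
        constructor
        · rintro ⟨c', ⟨c, hc, hs⟩, he⟩
          obtain ⟨t, ht, h1, h2, h3, rfl⟩ := (step_iff hR hneq _ _ _).1 hs
          rw [proj_apply hR ht] at he
          refine ⟨t, ht, h2, congrArg Prod.fst he, (proj A r0 c).2, ⟨c, hc, ?_⟩, h3,
            (congrArg Prod.snd he).symm⟩
          rw [h1]; rfl
        · rintro ⟨t, ht, h2, h1, v', ⟨c, hc, he⟩, h3, h4⟩
          have e1 : c.1 = t.src := congrArg Prod.fst he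
          have e2 : (proj A r0 c).2 = v' := congrArg Prod.snd he
          subst e2
          refine ⟨_, ⟨c, hc, (step_iff hR hneq _ _ _).2 ⟨t, ht, e1.symm, h2, h3, rfl⟩⟩, ?_⟩
          rw [proj_apply hR ht]
          exact Prod.ext h1 h4.symm
      rw [hpost]
      refine and_congr_left fun _ => ?_
      constructor
      · rintro h q _ v ⟨c, hc, he⟩
        obtain ⟨c', hs⟩ := h c hc
        obtain ⟨t, ht, h1, h2, h3, -⟩ := (step_iff hR hneq _ _ _).1 hs
        have e1 : c.1 = q := congrArg Prod.fst he
        have e2 : (proj A r0 c).2 = v := congrArg Prod.snd he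
        exact ⟨t, ht, h1.trans e1, h2, e2 ▸ h3⟩
      · intro h c hc
        obtain ⟨t, ht, h1, h2, h3⟩ := h c.1 (hS c hc) _ ⟨c, hc, rfl⟩
        exact ⟨_, (step_iff hR hneq _ _ _).2 ⟨t, ht, h1, h2, h3, rfl⟩⟩
    · rintro c' ⟨c, hc, t, ht, -, -, -, -, rfl⟩
      exact (A.wf t ht).2.1

theorem lang_eq [Finite Sigma] {A : NRA Sigma} {r0 : ℕ} (hR : A.R ⊆ {r0})
    (hneq : ∀ t ∈ A.Δ, t.gNeq = ∅) : RsA.Lang (D A r0) = NRA.URALang A := by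
  ext w
  have h1 := U_acc hR hneq w { c | c.1 ∈ A.I ∧ c.2 = fun _ => none }
    (fun c hc => A.I_sub hc.1)
  have h2 := D_acc (A := A) (r0 := r0) w { c | c.1 ∈ A.I ∧ c.2 = none } (fun _ => ∅) (by simp)
  have h3 : proj A r0 '' { c | c.1 ∈ A.I ∧ c.2 = fun _ => none } =
      { c | c.1 ∈ A.I ∧ c.2 = none } := by
    ext ⟨q, v⟩
    constructor
    · rintro ⟨⟨q', f⟩, ⟨hc, hf⟩, he⟩
      simp only at hc hf
      subst hf
      simp only [proj, ite_self, Prod.mk.injEq] at he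
      exact ⟨he.1 ▸ hc, he.2.symm⟩
    · rintro ⟨hc, hv⟩
      simp only at hc hv
      subst hv
      exact ⟨(q, fun _ => none), ⟨hc, rfl⟩, by simp [proj]⟩
  rw [h3] at h1
  have h4 : w ∈ RsA.Lang (D A r0) ↔ Acc A r0 { c | c.1 ∈ A.I ∧ c.2 = none } w := by
    rw [← h2]
    simp only [RsA.Lang, Set.mem_ofPred_eq]
    constructor
    · rintro ⟨q, hq, h⟩
      rw [Finset.mem_singleton.1 hq] at h
      exact h
    · intro h
      exact ⟨_, Finset.mem_singleton_self _, h⟩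
  rw [h4, ← h1]
  constructor
  · intro h q hq u v huv c hr
    exact h (q, fun _ => none) ⟨hq, rfl⟩ u v huv c hr
  · rintro h ⟨q, f⟩ ⟨hq, hf⟩ u v huv c hr
    simp only at hq hf
    subst hf
    exact h q hq u v huv c hr

end UraProof

/-- Every URA with at most one register and no disequality guards
can be converted to a deterministic RsA with the same language. -/
theorem ura_eq_one_to_drsa (Sigma : Type) [Fintype Sigma] [Nonempty Sigma]
    (A : NRA Sigma) (hreg : A.R.card ≤ 1) (hneq : ∀ t ∈ A.Δ, t.gNeq = ∅) :
    ∃ D : RsA Sigma, D.Deterministic ∧ RsA.Lang D = NRA.URALang A := by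
  obtain ⟨r0, hR⟩ := Finset.card_le_one_iff_subset_singleton.1 hreg
  exact ⟨UraProof.D A r0, UraProof.D_det A r0, UraProof.lang_eq hR hneq⟩
end
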